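/- arXiv:math/9302207 — 2 statements merged into one kernel-verified Lean document; each statement's English description precedes it below -/
import Mathlib

section
/- Let 1 ≤ q < 2 and q ≤ p < p_q, where 1/p_q = 1/q − 1/2, and let 2 < s ≤ ∞ be defined by 1/s = 1/q' + (1 − 2/q')(1/q − 1/p) (q' the conjugate exponent of q). For every constant C > 0 and every sequence (k_n) of natural numbers such that π_{p,q}(T) ≤ C · π_{p,q}^{k_n}(T) holds for every n and every bounded operator T between real Banach spaces of rank at most n, there exists a constant c₁ such that n^{s/2} ≤ c₁ · e^{c₁ √(1 + ln n)} · k_n for all n. -/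
open scoped ENNReal NNReal BigOperators

noncomputable section

/-- The `ℓ_p`-sum `(∑ i, f i ^ p) ^ (1/p)` of a finite family in `ℝ≥0∞`,
with the usual sup-modification for `p = ∞`. -/
def eSum (p : ℝ≥0∞) {ι : Type*} [Fintype ι] (f : ι → ℝ≥0∞) : ℝ≥0∞ :=
  if p = ∞ then ⨆ i, f i else (∑ i, f i ^ p.toReal) ^ (1 / p.toReal)

/-- The weak `ℓ_q`-norm of a finite family of vectors:
`sup { (∑ k |⟨x_k, x*⟩|^q)^(1/q) : x* in the unit ball of the dual }`. -/
def weakLq (q : ℝ≥0∞) {X : Type*} [NormedAddCommGroup X] [NormedSpace ℝ X]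
    {n : ℕ} (x : Fin n → X) : ℝ≥0∞ :=
  ⨆ f : {f : X →L[ℝ] ℝ // ‖f‖ ≤ 1}, eSum q fun k => ENNReal.ofReal |f.1 (x k)|

/-- The `(p,q)`-summing norm of `T` with respect to `n` vectors. -/
def piN (p q : ℝ≥0∞) {X Y : Type*} [NormedAddCommGroup X] [NormedSpace ℝ X]
    [NormedAddCommGroup Y] [NormedSpace ℝ Y] (n : ℕ) (T : X →L[ℝ] Y) : ℝ≥0∞ :=
  ⨆ x : {x : Fin n → X // weakLq q x ≤ 1}, eSum p fun k => ENNReal.ofReal ‖T (x.1 k)‖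

/-- The `(p,q)`-summing norm of `T`. -/
def piPQ (p q : ℝ≥0∞) {X Y : Type*} [NormedAddCommGroup X] [NormedSpace ℝ X]
    [NormedAddCommGroup Y] [NormedSpace ℝ Y] (T : X →L[ℝ] Y) : ℝ≥0∞ :=
  ⨆ n : ℕ, piN p q n T

/-- `T` has rank at most `n`: its range is a finite-dimensional subspace of
dimension at most `n`. -/
def RankLE {X Y : Type*} [NormedAddCommGroup X] [NormedSpace ℝ X]
    [NormedAddCommGroup Y] [NormedSpace ℝ Y] (T : X →L[ℝ] Y) (n : ℕ) : Prop :=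
  FiniteDimensional ℝ (LinearMap.range (T : X →ₗ[ℝ] Y)) ∧
    Module.finrank ℝ (LinearMap.range (T : X →ₗ[ℝ] Y)) ≤ n

/-- The average of `‖∑ k, ε k • x k‖²` over all `2^n` sign choices `ε ∈ {-1,1}^n`. -/
def radAvg {X : Type*} [NormedAddCommGroup X] [NormedSpace ℝ X] {n : ℕ}
    (x : Fin n → X) : ℝ :=
  (∑ ε : Fin n → Bool, ‖∑ k, (if ε k then (1 : ℝ) else -1) • x k‖ ^ 2) / 2 ^ n

/-- The Rademacher cotype `q` constant of `T` with respect to `n` vectors. -/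
def cotypeN (q : ℝ) {X Y : Type*} [NormedAddCommGroup X] [NormedSpace ℝ X]
    [NormedAddCommGroup Y] [NormedSpace ℝ Y] (n : ℕ) (T : X →L[ℝ] Y) : ℝ≥0∞ :=
  ⨆ x : {x : Fin n → X // Real.sqrt (radAvg x) ≤ 1},
    (∑ k, ENNReal.ofReal ‖T (x.1 k)‖ ^ q) ^ (1 / q)

/-- The Rademacher cotype `q` constant of `T`. -/
def cotype (q : ℝ) {X Y : Type*} [NormedAddCommGroup X] [NormedSpace ℝ X]
    [NormedAddCommGroup Y] [NormedSpace ℝ Y] (T : X →L[ℝ] Y) : ℝ≥0∞ :=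
  ⨆ n : ℕ, cotypeN q n T


lemma aux_holder {ι : Type*} [Fintype ι] (q : ℝ) (hq : 1 ≤ q) (a b : ι → ℝ)
    (ha : ∀ i, 0 ≤ a i) (hb : ∀ i, 0 ≤ b i) :
    ∑ i, a i ^ (1 - 1 / q) * b i ≤ (∑ i, a i) ^ (1 - 1 / q) * (∑ i, b i ^ q) ^ (1 / q) := by
  rcases hq.eq_or_lt with rfl | hq1
  · simp
  · have hc : q.HolderConjugate q.conjExponent := Real.HolderConjugate.conjExponent hq1
    have h := Real.inner_le_Lp_mul_Lq_of_nonneg Finset.univ (f := fun i => a i ^ (1 - 1 / q)) (g := b)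
      hc.symm (fun i _ => Real.rpow_nonneg (ha i) _) (fun i _ => hb i)
    have e : 1 / q.conjExponent = 1 - 1 / q := by
      have := hc.inv_add_inv_eq_one
      simp only [one_div]; linarith
    have e2 : (1 - 1 / q) * q.conjExponent = 1 := by
      rw [← e]; field_simp [hc.symm.ne_zero]
    rw [e] at h
    refine h.trans_eq ?_
    congr 2
    refine Finset.sum_congr rfl fun i _ => ?_
    rw [← Real.rpow_mul (ha i), e2, Real.rpow_one]

lemma aux_signs {E ι : Type*} [NormedAddCommGroup E] [InnerProductSpace ℝ E] (y : ι → E)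
    (s : Finset ι) : ∃ ε : ι → ℝ, (∀ i, |ε i| ≤ 1) ∧
      ∑ i ∈ s, ‖y i‖ ^ 2 ≤ ‖∑ i ∈ s, ε i • y i‖ ^ 2 := by
  classical
  induction s using Finset.induction_on with
  | empty => exact ⟨0, by simp, by simp⟩
  | insert a s ha ih =>
    obtain ⟨ε, h1, h2⟩ := ih
    set v := ∑ i ∈ s, ε i • y i with hv
    have key : ∃ δ : ℝ, |δ| = 1 ∧ 0 ≤ δ * inner ℝ (y a) v := by
      rcases le_total 0 (inner ℝ (y a) v) with h | h
      · exact ⟨1, by simp, by simpa⟩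
      · exact ⟨-1, by simp, by simpa⟩
    obtain ⟨δ, hδ, hin⟩ := key
    refine ⟨Function.update ε a δ, fun i => ?_, ?_⟩
    · by_cases h : i = a
      · subst h; simp [hδ]
      · simp [Function.update_of_ne h, h1]
    · rw [Finset.sum_insert ha, Finset.sum_insert ha]
      have : ∑ i ∈ s, Function.update ε a δ i • y i = v := by
        refine Finset.sum_congr rfl fun i hi => ?_
        rw [Function.update_of_ne]
        rintro rfl; exact ha hi
      rw [this, Function.update_self, norm_add_sq_real, norm_smul, Real.norm_eq_abs, hδ,
        real_inner_smul_left]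
      nlinarith

/-- The bound of `∑ ‖x_j‖_2 ^ r`. -/
lemma aux_two {ι : Type*} [Fintype ι] {k : ℕ} (q r : ℝ) (hq : 1 ≤ q) (hq2 : q < 2)
    (hr : 1 / r = 1 / q - 1 / 2) (x : Fin k → EuclideanSpace ℝ ι)
    (hx : ∀ g : ι → ℝ, ∑ i, |g i| ^ q ≤ 1 → ∑ j, |∑ i, g i * x j i| ^ q ≤ 1) :
    ∑ j, ‖x j‖ ^ r ≤ Fintype.card ι := by
  have hq0 : 0 < q := by linarith
  have hr0 : 0 < r := by
    rw [← one_div_pos, hr, sub_pos]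
    exact one_div_lt_one_div_of_lt hq0 hq2
  set a : ℝ := 1 - 1 / q with ha
  have ha0 : 0 ≤ a := by
    have : 1 / q ≤ 1 := by rw [div_le_one hq0]; exact hq
    linarith
  have har : a = 1 / 2 - 1 / r := by rw [hr, ha]; ring
  set S := ∑ j, ‖x j‖ ^ r with hS
  have hS0 : 0 ≤ S := Finset.sum_nonneg fun j _ => by positivity
  set N : ℝ := ((Fintype.card ι : ℕ) : ℝ) with hN
  have hN0 : 0 ≤ N := by positivity
  rcases hS0.eq_or_lt with h | hSpos
  · rw [← h]; exact hN0
  obtain ⟨ε, h1, h2⟩ := aux_signs (fun j => ((‖x j‖ ^ r) ^ a) • x j) Finset.univ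
  set v := ∑ j, ε j • (((‖x j‖ ^ r) ^ a) • x j) with hv
  have e1 : ∑ j, ‖((‖x j‖ ^ r) ^ a) • x j‖ ^ 2 = S := by
    refine Finset.sum_congr rfl fun j _ => ?_
    rw [norm_smul, Real.norm_of_nonneg (by positivity), mul_pow, ← Real.rpow_mul (norm_nonneg _),
      ← Real.rpow_natCast, ← Real.rpow_natCast, ← Real.rpow_mul (norm_nonneg _),
      ← Real.rpow_add_of_nonneg (norm_nonneg _) (by positivity) (by positivity)]
    congr 1
    rw [har]; push_cast; field_simp; ring
  rw [e1] at h2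
  have hvpos : 0 < ‖v‖ := by
    rcases (norm_nonneg v).eq_or_lt with h | h
    · rw [← h] at h2; norm_num at h2; linarith
    · exact h
  -- scaled hypothesis
  have hscale : (∑ j, |∑ i, v i * x j i| ^ q) ^ (1 / q) ≤ (∑ i, |v i| ^ q) ^ (1 / q) := by
    set t := (∑ i, |v i| ^ q) with ht
    have ht0 : 0 ≤ t := Finset.sum_nonneg fun j _ => by positivity
    have htpos : 0 < t := by
      obtain ⟨i, hi⟩ : ∃ i, v i ≠ 0 := by
        by_contra! hcon
        have : v = 0 := by ext i; simpa using hcon i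
        rw [this] at hvpos; simp at hvpos
      refine lt_of_lt_of_le (Real.rpow_pos_of_pos (abs_pos.2 hi) q) ?_
      exact Finset.single_le_sum (f := fun i => |v i| ^ q) (fun j _ => by positivity)
        (Finset.mem_univ i)
    have hcq : ((t ^ (-(1 / q))) : ℝ) ^ q = t⁻¹ := by
      rw [← Real.rpow_mul ht0, ← Real.rpow_neg_one]; congr 1; field_simp
    have hc0 : 0 ≤ t ^ (-(1 / q)) := by positivity
    have := hx (fun i => t ^ (-(1 / q)) * v i) (by
      simp only [abs_mul, abs_of_nonneg hc0]
      simp_rw [Real.mul_rpow hc0 (abs_nonneg _), hcq]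
      rw [← Finset.mul_sum, ← ht]
      exact (inv_mul_cancel₀ htpos.ne').le)
    simp_rw [mul_assoc, ← Finset.mul_sum, abs_mul, abs_of_nonneg hc0,
      Real.mul_rpow hc0 (abs_nonneg _), hcq] at this
    rw [← Finset.mul_sum, inv_mul_le_iff₀ htpos, mul_one] at this
    exact Real.rpow_le_rpow (Finset.sum_nonneg fun j _ => by positivity) this (by positivity)
  have hpm : (∑ i, |v i| ^ q) ^ (1 / q) ≤ N ^ (1 / r) * ‖v‖ := by
    have h3 := Real.rpow_sum_le_const_mul_sum_rpow Finset.univ (fun i => |v i| ^ q) (p := 2 / q)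
      (by rw [le_div_iff₀ hq0]; linarith)
    have e3 : ∑ i, |(|v i| ^ q)| ^ (2 / q) = ‖v‖ ^ 2 := by
      rw [EuclideanSpace.norm_sq_eq]
      refine Finset.sum_congr rfl fun i _ => ?_
      rw [abs_of_nonneg (by positivity), ← Real.rpow_mul (abs_nonneg _),
        mul_div_cancel₀ _ hq0.ne', Real.norm_eq_abs]
      exact_mod_cast Real.rpow_natCast _ 2
    rw [e3] at h3
    have e4 : ∑ i, |(|v i| ^ q)| = ∑ i, |v i| ^ q :=
      Finset.sum_congr rfl fun i _ => abs_of_nonneg (by positivity)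
    rw [e4, Finset.card_univ, ← hN] at h3
    have h5 := Real.rpow_le_rpow (by positivity) h3 (show (0:ℝ) ≤ 1 / 2 by norm_num)
    rw [← Real.rpow_mul (Finset.sum_nonneg fun j _ => by positivity),
      Real.mul_rpow (by positivity) (by positivity), ← Real.rpow_mul hN0,
      ← Real.sqrt_eq_rpow (‖v‖ ^ 2), Real.sqrt_sq hvpos.le] at h5
    have e5 : 2 / q * (1 / 2) = 1 / q := by ring
    have e6 : (2 / q - 1) * (1 / 2) = 1 / r := by rw [hr]; ring
    rwa [e5, e6] at h5
  have hhold := aux_holder q hq (fun j => ‖x j‖ ^ r) (fun j => |∑ i, v i * x j i|)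
    (fun j => Real.rpow_nonneg (norm_nonneg _) _) (fun j => abs_nonneg _)
  rw [← ha, ← hS] at hhold
  have hv2 : ‖v‖ ^ 2 ≤ S ^ a * (N ^ (1 / r) * ‖v‖) := by
    have e7 : ‖v‖ ^ 2 = ∑ j, ε j * (((‖x j‖ ^ r) ^ a) * (∑ i, v i * x j i)) := by
      rw [← real_inner_self_eq_norm_sq]
      nth_rewrite 2 [hv]
      rw [inner_sum]
      refine Finset.sum_congr rfl fun j _ => ?_
      rw [real_inner_smul_right, real_inner_smul_right]
      congr 2
      simp only [PiLp.inner_apply, RCLike.inner_apply, conj_trivial]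
      exact Finset.sum_congr rfl fun i _ => mul_comm _ _
    calc ‖v‖ ^ 2 ≤ ∑ j, (‖x j‖ ^ r) ^ a * |∑ i, v i * x j i| := by
          rw [e7]
          refine Finset.sum_le_sum fun j _ => ?_
          refine (le_abs_self _).trans ?_
          rw [abs_mul, abs_mul, abs_of_nonneg (show 0 ≤ (‖x j‖ ^ r) ^ a by positivity)]
          exact mul_le_of_le_one_left (by positivity) (h1 j)
      _ ≤ S ^ a * (∑ j, |∑ i, v i * x j i| ^ q) ^ (1 / q) :=
          hhold
      _ ≤ S ^ a * (N ^ (1 / r) * ‖v‖) :=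
          mul_le_mul_of_nonneg_left (hscale.trans hpm) (Real.rpow_nonneg hS0 a)
  have hv3 : ‖v‖ ≤ S ^ a * N ^ (1 / r) := by
    have : ‖v‖ * ‖v‖ ≤ (S ^ a * N ^ (1 / r)) * ‖v‖ := by nlinarith
    exact le_of_mul_le_mul_right this hvpos
  have hv4 : S ^ (1 / 2 : ℝ) ≤ S ^ a * N ^ (1 / r) := by
    refine le_trans ?_ hv3
    rw [← Real.sqrt_eq_rpow]
    exact Real.sqrt_le_iff.2 ⟨hvpos.le, h2⟩
  have e8 : S ^ (1 / 2 : ℝ) = S ^ a * S ^ (1 / r) := by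
    rw [← Real.rpow_add hSpos, har]; congr 1; ring
  rw [e8] at hv4
  have hv5 := le_of_mul_le_mul_left hv4 (Real.rpow_pos_of_pos hSpos a)
  exact (Real.rpow_le_rpow_iff hS0 hN0 (by positivity)).1 hv5

/-- The bound of `∑ ‖x_j‖_1 ^ p`. -/
lemma aux_one {ι : Type*} [Fintype ι] [DecidableEq ι] {k : ℕ} (q r p s : ℝ) (hq : 1 ≤ q)
    (hq2 : q < 2)
    (hr : 1 / r = 1 / q - 1 / 2) (hqp : q ≤ p) (hpr : p < r) (hs0 : 0 < s)
    (hs : 1 / s = (1 - 1 / q) + (1 - 2 * (1 - 1 / q)) * (1 / q - 1 / p))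
    (hN : 0 < Fintype.card ι)
    (x : Fin k → ι → ℝ)
    (hx : ∀ g : ι → ℝ, ∑ i, |g i| ^ q ≤ 1 → ∑ j, |∑ i, g i * x j i| ^ q ≤ 1) :
    ∑ j, (∑ i, |x j i|) ^ p ≤ (Fintype.card ι : ℝ) ^ (p / s + 1) := by
  have hq0 : 0 < q := by linarith
  have hp0 : 0 < p := by linarith
  have hr0 : 0 < r := by linarith
  have hrow : ∀ i, ∑ j, |x j i| ^ q ≤ 1 := by
    intro i
    have := hx (Pi.single i 1) (by
      rw [Finset.sum_eq_single i]
      · simp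
      · intro b _ hb; simp [Pi.single_eq_of_ne hb, hq0.ne']
      · simp)
    simpa [Pi.single_apply] using this
  have h2 := aux_two q r hq hq2 hr (fun j => WithLp.toLp 2 (x j)) hx
  set N : ℝ := ((Fintype.card ι : ℕ) : ℝ) with hNdef
  have hN0 : 0 < N := by rw [hNdef]; exact_mod_cast hN
  have b0 : ∀ j, 0 ≤ ∑ i, |x j i| := fun j => Finset.sum_nonneg fun i _ => abs_nonneg _
  have hA : ∑ j, (∑ i, |x j i|) ^ q ≤ N ^ q := by
    calc ∑ j, (∑ i, |x j i|) ^ q ≤ ∑ j, N ^ (q - 1) * ∑ i, |x j i| ^ q := by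
          refine Finset.sum_le_sum fun j _ => ?_
          simpa using Real.rpow_sum_le_const_mul_sum_rpow Finset.univ (x j) hq
      _ = N ^ (q - 1) * ∑ i, ∑ j, |x j i| ^ q := by
          rw [← Finset.mul_sum, Finset.sum_comm]
      _ ≤ N ^ (q - 1) * ∑ i : ι, 1 := by
          gcongr with i
          exact hrow i
      _ = N ^ q := by
          simp only [Finset.sum_const, Finset.card_univ, nsmul_eq_mul, mul_one]
          rw [← hNdef, ← Real.rpow_add_one hN0.ne']; simp
  have hB : ∑ j, (∑ i, |x j i|) ^ r ≤ N ^ (r / q) := by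
    have e : r / q = r / 2 + 1 := by
      have : 1 / q = 1 / r + 1 / 2 := by linarith
      rw [div_eq_mul_one_div, this]; field_simp
      ring
    calc ∑ j, (∑ i, |x j i|) ^ r ≤ ∑ j, N ^ (r / 2) * ‖WithLp.toLp 2 (x j)‖ ^ r := by
          refine Finset.sum_le_sum fun j _ => ?_
          have h : ∑ i, |x j i| ≤ N ^ (1 / 2 : ℝ) * ‖WithLp.toLp 2 (x j)‖ := by
            rw [EuclideanSpace.norm_eq, ← Real.sqrt_eq_rpow, ← Real.sqrt_mul hN0.le]
            apply Real.le_sqrt_of_sq_le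
            simpa using sq_sum_le_card_mul_sum_sq (s := Finset.univ) (f := fun i => |x j i|)
          calc _ ≤ (N ^ (1 / 2 : ℝ) * ‖WithLp.toLp 2 (x j)‖) ^ r :=
                Real.rpow_le_rpow (b0 j) h hr0.le
            _ = _ := by
                rw [Real.mul_rpow (by positivity) (by positivity), ← Real.rpow_mul hN0.le]
                congr 2; ring
      _ ≤ N ^ (r / 2) * N := by rw [← Finset.mul_sum]; gcongr
      _ = N ^ (r / q) := by rw [← Real.rpow_add_one hN0.ne', e]
  have hqr : q < r := by linarith
  set α := (r - p) / (r - q) with hα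
  have hα0 : 0 ≤ α := div_nonneg (by linarith) (by linarith)
  have hα1 : α ≤ 1 := by rw [hα, div_le_one (by linarith)]; linarith
  have hpe : p = q * α + r * (1 - α) := by
    have : r - q ≠ 0 := by linarith
    rw [hα]; field_simp; ring
  have hexp : q * α + r / q * (1 - α) = p / s + 1 := by
    have h1 : 2 * q = r * (2 - q) := by
      field_simp at hr; linarith
    have hq2' : (2 : ℝ) - q ≠ 0 := by linarith
    have hrr : r = 2 * q / (2 - q) := by rw [eq_div_iff hq2']; linarith
    rw [div_eq_mul_one_div p s, hs]
    have hα' : α * (r - q) = r - p := by rw [hα]; field_simp [show r - q ≠ 0 by linarith]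
    have hα2 : α * q ^ 2 = 2 * q - p * (2 - q) := by
      rw [hrr] at hα'
      field_simp at hα'
      nlinarith
    have : α = (2 * q - p * (2 - q)) / q ^ 2 := by rw [eq_div_iff (by positivity)]; exact hα2
    rw [this, hrr]
    field_simp
    ring
  have hS1 : 0 < N ^ q := by positivity
  have hS2 : 0 < N ^ (r / q) := by positivity
  have key : ∀ b : ℝ, 0 ≤ b → b ^ p ≤
      N ^ (p / s + 1) * (α * (b ^ q / N ^ q) + (1 - α) * (b ^ r / N ^ (r / q))) := by
    intro b hb
    have h := Real.geom_mean_le_arith_mean2_weighted hα0 (sub_nonneg.2 hα1)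
      (show 0 ≤ b ^ q / N ^ q by positivity) (show 0 ≤ b ^ r / N ^ (r / q) by positivity) (by ring)
    refine le_trans (le_of_eq ?_) (mul_le_mul_of_nonneg_left h (by positivity))
    rw [Real.div_rpow (by positivity) (by positivity), Real.div_rpow (by positivity) (by positivity),
      ← Real.rpow_mul hb, ← Real.rpow_mul hb, ← Real.rpow_mul hN0.le, ← Real.rpow_mul hN0.le,
      div_mul_div_comm, ← Real.rpow_add hN0, hexp,
      ← Real.rpow_add_of_nonneg hb (by positivity) (mul_nonneg hr0.le (sub_nonneg.2 hα1)), ← hpe]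
    field_simp
  calc ∑ j, (∑ i, |x j i|) ^ p ≤ ∑ j, N ^ (p / s + 1) * (α * ((∑ i, |x j i|) ^ q / N ^ q)
        + (1 - α) * ((∑ i, |x j i|) ^ r / N ^ (r / q))) :=
        Finset.sum_le_sum fun j _ => key _ (b0 j)
    _ = N ^ (p / s + 1) * (α * ((∑ j, (∑ i, |x j i|) ^ q) / N ^ q)
        + (1 - α) * ((∑ j, (∑ i, |x j i|) ^ r) / N ^ (r / q))) := by
        rw [← Finset.mul_sum, Finset.sum_add_distrib, ← Finset.mul_sum, ← Finset.mul_sum,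
          ← Finset.sum_div, ← Finset.sum_div]
    _ ≤ N ^ (p / s + 1) * (α * 1 + (1 - α) * 1) := by
        have hα3 : 0 ≤ 1 - α := sub_nonneg.2 hα1
        gcongr
        · exact (div_le_one hS1).2 hA
        · exact (div_le_one hS2).2 hB
    _ = _ := by ring

lemma aux_sign_abs (a : SignType) : ‖(a : ℝ)‖ ≤ 1 := by
  cases a <;> simp

lemma aux_conj (q : ℝ) (q' : ℝ≥0∞) (hq1 : 1 ≤ q) (hconj : 1 / ENNReal.ofReal q + 1 / q' = 1) :
    1 ≤ q' ∧ (1 / q').toReal = 1 - 1 / q ∧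
      ((q = 1 ∧ q' = ∞) ∨ (0 < q'.toReal ∧ q.HolderConjugate q'.toReal)) := by
  have hq0 : 0 < q := by linarith
  have hle : 1 / q' ≤ 1 := by 
    calc 1 / q' ≤ 1 / ENNReal.ofReal q + 1 / q' := le_add_self
      _ = 1 := hconj
  have h1 : 1 ≤ q' := by simpa using hle
  have hne : 1 / q' ≠ ∞ := ne_top_of_le_ne_top (by simp) hle
  have hne2 : 1 / ENNReal.ofReal q ≠ ∞ := by
    rw [Ne, ENNReal.div_eq_top]; simp [hq0]
  have ht := congrArg ENNReal.toReal hconj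
  rw [ENNReal.toReal_add hne2 hne, ENNReal.toReal_div, ENNReal.toReal_ofReal hq0.le] at ht
  simp only [ENNReal.toReal_one] at ht
  refine ⟨h1, by linarith, ?_⟩
  rcases hq1.eq_or_lt with rfl | hlt
  · left
    refine ⟨rfl, ?_⟩
    have h0 : (1 / q').toReal = 0 := by norm_num at ht ⊢; exact ht
    rw [ENNReal.toReal_eq_zero_iff] at h0
    rcases h0 with h0 | h0
    · simpa using h0
    · exact absurd h0 hne
  · right
    have h0 : 0 < (1 / q').toReal := by
      have : 1 / q < 1 := by rw [div_lt_one hq0]; exact hlt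
      linarith
    rw [ENNReal.toReal_div, ENNReal.toReal_one] at h0 ht
    have h2 : 0 < q'.toReal := one_div_pos.1 h0
    exact ⟨h2, by rw [Real.holderConjugate_iff]; refine ⟨hlt, ?_⟩; simpa using ht⟩

lemma aux_A {ι : Type*} [Fintype ι] [DecidableEq ι] (q : ℝ) (q' : ℝ≥0∞) [Fact (1 ≤ q')]
    (hD : (q = 1 ∧ q' = ∞) ∨ (0 < q'.toReal ∧ q.HolderConjugate q'.toReal))
    (f : PiLp q' (fun _ : ι => ℝ) →L[ℝ] ℝ) (hf : ‖f‖ ≤ 1) :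
    ∑ i, |f (PiLp.single q' i 1)| ^ q ≤ 1 := by
  have hexp : ∀ c : ι → ℝ, f (WithLp.toLp q' c) = ∑ i, c i * f (PiLp.single q' i 1) := by
    intro c
    have : WithLp.toLp q' c = ∑ i, c i • (PiLp.single q' i 1 : PiLp q' (fun _ : ι => ℝ)) := by
      ext j
      simp [Pi.single_apply]
    rw [this, map_sum]
    simp
  have hb : ∀ c : ι → ℝ, ∑ i, c i * f (PiLp.single q' i 1) ≤ ‖WithLp.toLp q' c‖ := by
    intro c
    rw [← hexp]
    refine (le_abs_self _).trans ((f.le_of_opNorm_le hf _).trans (by simp))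
  set F : ι → ℝ := fun i => f (PiLp.single q' i 1) with hF
  rcases hD with ⟨rfl, rfl⟩ | ⟨h0, hc⟩
  · have h := hb (fun i => SignType.sign (F i))
    have hn : ‖WithLp.toLp ∞ (fun i => ((SignType.sign (F i) : SignType) : ℝ))‖ ≤ 1 := by
      rw [PiLp.norm_eq_ciSup]
      refine Real.iSup_le (fun i => ?_) zero_le_one
      exact aux_sign_abs _
    refine le_trans (le_of_eq ?_) (h.trans hn)
    refine Finset.sum_congr rfl fun i _ => ?_
    rw [Real.rpow_one, sign_mul_self]
  · have hq0 : 0 < q := hc.pos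
    have hq1 : 1 < q := hc.lt
    set S := ∑ i, |F i| ^ q with hS
    have hS0 : 0 ≤ S := Finset.sum_nonneg fun i _ => by positivity
    have h := hb (fun i => SignType.sign (F i) * |F i| ^ (q - 1))
    have e1 : ∑ i, (SignType.sign (F i) * |F i| ^ (q - 1)) * F i = S := by
      refine Finset.sum_congr rfl fun i _ => ?_
      rw [mul_right_comm, sign_mul_self]
      rcases eq_or_ne (F i) 0 with h | h
      · simp [h, hq0.ne']
      · nth_rewrite 1 [← Real.rpow_one |F i|]
        rw [← Real.rpow_add (abs_pos.2 h)]; congr 1; ring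
    have e2 : ‖WithLp.toLp q' (fun i => (SignType.sign (F i) * |F i| ^ (q - 1) : ℝ))‖ ≤
        S ^ (1 / q'.toReal) := by
      rw [PiLp.norm_eq_sum h0]
      refine Real.rpow_le_rpow (Finset.sum_nonneg fun i _ => by positivity) ?_ (by positivity)
      refine Finset.sum_le_sum fun i _ => ?_
      have : ‖(SignType.sign (F i) * |F i| ^ (q - 1) : ℝ)‖ ≤ |F i| ^ (q - 1) := by
        rw [norm_mul, Real.norm_of_nonneg (show 0 ≤ |F i| ^ (q - 1) by positivity)]
        refine mul_le_of_le_one_left (by positivity) ?_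
        exact aux_sign_abs _
      refine (Real.rpow_le_rpow (norm_nonneg _) this h0.le).trans_eq ?_
      rw [← Real.rpow_mul (abs_nonneg _)]
      congr 1
      exact hc.sub_one_mul_conj
    have h3 := (e1.symm.le.trans h).trans e2
    by_contra! hgt
    have hSpos : 0 < S := by linarith
    have : S ^ (1 / q'.toReal) < S ^ (1 : ℝ) := by
      apply Real.rpow_lt_rpow_of_exponent_lt hgt
      rw [div_lt_one h0]; exact hc.symm.lt
    rw [Real.rpow_one] at this
    linarith

lemma aux_B {ι : Type*} [Fintype ι] (q : ℝ) (q' : ℝ≥0∞) [Fact (1 ≤ q')]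
    (hD : (q = 1 ∧ q' = ∞) ∨ (0 < q'.toReal ∧ q.HolderConjugate q'.toReal))
    (g : ι → ℝ) (hg : ∑ i, |g i| ^ q ≤ 1) (x : PiLp q' (fun _ : ι => ℝ)) :
    |∑ i, g i * x i| ≤ ‖x‖ := by
  refine (Finset.abs_sum_le_sum_abs _ _).trans ?_
  simp_rw [abs_mul]
  rcases hD with ⟨rfl, rfl⟩ | ⟨h0, hc⟩
  · simp only [Real.rpow_one] at hg
    calc ∑ i, |g i| * |x i| ≤ ∑ i, |g i| * ‖x‖ := by
          gcongr with i
          exact PiLp.norm_apply_le x i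
      _ = (∑ i, |g i|) * ‖x‖ := by rw [Finset.sum_mul]
      _ ≤ ‖x‖ := mul_le_of_le_one_left (norm_nonneg _) hg
  · have h := Real.inner_le_Lp_mul_Lq_of_nonneg Finset.univ (f := fun i => |g i|)
      (g := fun i => |x i|) hc (fun i _ => abs_nonneg _) (fun i _ => abs_nonneg _)
    refine h.trans ?_
    rw [PiLp.norm_eq_sum h0]
    refine mul_le_of_le_one_left (by positivity) ?_
    exact Real.rpow_le_one (Finset.sum_nonneg fun i _ => by positivity) hg
      (by have := hc.pos; positivity)

lemma aux_eSum {ι : Type*} [Fintype ι] (p : ℝ) (hp : 0 < p) (a : ι → ℝ) (ha : ∀ i, 0 ≤ a i) :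
    eSum (ENNReal.ofReal p) (fun i => ENNReal.ofReal (a i)) =
      ENNReal.ofReal ((∑ i, a i ^ p) ^ (1 / p)) := by
  rw [eSum, if_neg ENNReal.ofReal_ne_top, ENNReal.toReal_ofReal hp.le,
    ← ENNReal.ofReal_rpow_of_nonneg (Finset.sum_nonneg fun i _ => Real.rpow_nonneg (ha i) _)
      (by positivity), ENNReal.ofReal_sum_of_nonneg (fun i _ => Real.rpow_nonneg (ha i) _)]
  congr 1
  exact Finset.sum_congr rfl fun i _ => ENNReal.ofReal_rpow_of_nonneg (ha i) hp.le

lemma aux_eSum_le_one {ι : Type*} [Fintype ι] (p : ℝ) (hp : 0 < p) (a : ι → ℝ)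
    (ha : ∀ i, 0 ≤ a i) :
    eSum (ENNReal.ofReal p) (fun i => ENNReal.ofReal (a i)) ≤ 1 ↔ ∑ i, a i ^ p ≤ 1 := by
  have h0 : 0 ≤ ∑ i, a i ^ p := Finset.sum_nonneg fun i _ => Real.rpow_nonneg (ha i) _
  rw [aux_eSum p hp a ha, ENNReal.ofReal_le_one]
  constructor
  · intro h
    by_contra! hgt
    exact absurd h (not_le.2 (Real.one_lt_rpow hgt (by positivity)))
  · intro h
    exact Real.rpow_le_one h0 h (by positivity)

lemma aux_weak {X : Type*} [NormedAddCommGroup X] [NormedSpace ℝ X] {n : ℕ} (q : ℝ) (hq : 0 < q)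
    (x : Fin n → X) : weakLq (ENNReal.ofReal q) x ≤ 1 ↔
      ∀ f : X →L[ℝ] ℝ, ‖f‖ ≤ 1 → ∑ j, |f (x j)| ^ q ≤ 1 := by
  rw [weakLq, iSup_le_iff]
  constructor
  · intro h f hf
    exact (aux_eSum_le_one q hq (fun j => |f (x j)|) fun _ => abs_nonneg _).1 (h ⟨f, hf⟩)
  · intro h f
    exact (aux_eSum_le_one q hq (fun j => |f.1 (x j)|) fun _ => abs_nonneg _).2 (h f.1 f.2)

/-- Low coherence family from polynomials over a prime field. -/
lemma aux_code (m d N : ℕ) [hm : Fact m.Prime] (hN : N ≤ m ^ d) :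
    ∃ A : Fin N → (ZMod m × ZMod m) → ℝ,
      (∀ i, ∑ t, A i t * A i t = m) ∧
      (∀ i j, i ≠ j → |∑ t, A i t * A j t| ≤ d) := by
  classical
  have hc : Fintype.card (Fin N) ≤ Fintype.card (Fin d → ZMod m) := by
    simpa [ZMod.card] using hN
  obtain ⟨φ⟩ := Function.Embedding.nonempty_of_card_le hc
  let P : Fin N → Polynomial (ZMod m) := fun i =>
    ((Polynomial.degreeLTEquiv (ZMod m) d).symm (φ i) : Polynomial (ZMod m))
  have hdeg : ∀ i, (P i).degree < d := fun i =>
    Polynomial.mem_degreeLT.1 ((Polynomial.degreeLTEquiv (ZMod m) d).symm (φ i)).2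
  have hinj : Function.Injective P := by
    intro i j h
    exact φ.injective ((Polynomial.degreeLTEquiv (ZMod m) d).symm.injective (Subtype.ext h))
  have hsum : ∀ i j, ∑ t : ZMod m × ZMod m, (if (P i).eval t.1 = t.2 then (1 : ℝ) else 0) *
      (if (P j).eval t.1 = t.2 then (1 : ℝ) else 0) =
      ((Finset.univ.filter fun z : ZMod m => (P i).eval z = (P j).eval z).card : ℝ) := by
    intro i j
    rw [Fintype.sum_prod_type, Finset.card_filter, Nat.cast_sum]
    refine Finset.sum_congr rfl fun z _ => ?_
    simp [eq_comm]
  refine ⟨fun i t => if (P i).eval t.1 = t.2 then (1 : ℝ) else 0, fun i => ?_, fun i j hij => ?_⟩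
  · rw [hsum]; simp [ZMod.card]
  · rw [hsum, abs_of_nonneg (by positivity)]
    norm_cast
    by_contra! hlt
    refine hij (hinj (Polynomial.eq_of_degrees_lt_of_eval_finset_eq
      (Finset.univ.filter fun z : ZMod m => (P i).eval z = (P j).eval z) ?_ ?_ ?_))
    · exact (hdeg i).trans (by exact_mod_cast hlt)
    · exact (hdeg j).trans (by exact_mod_cast hlt)
    · intro z hz; simpa using hz

def auxFun {ι : Type*} [Fintype ι] (q' : ℝ≥0∞) (g : ι → ℝ) :
    PiLp q' (fun _ : ι => ℝ) →ₗ[ℝ] ℝ where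
  toFun y := ∑ i, g i * y i
  map_add' x y := by simp [mul_add, Finset.sum_add_distrib]
  map_smul' c x := by
    simp only [PiLp.smul_apply, smul_eq_mul, RingHom.id_apply, Finset.mul_sum]
    exact Finset.sum_congr rfl fun i _ => by ring

def auxFun' {ι : Type*} [Fintype ι] (g : ι → ℝ) : (ι → ℝ) →ₗ[ℝ] ℝ where
  toFun y := ∑ i, g i * y i
  map_add' x y := by simp [mul_add, Finset.sum_add_distrib]
  map_smul' c x := by
    simp only [Pi.smul_apply, smul_eq_mul, RingHom.id_apply, Finset.mul_sum]
    exact Finset.sum_congr rfl fun i _ => by ring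

lemma aux_add_rpow (p : ℝ) (hp : 0 < p) (b : ℝ) (hb : 0 ≤ b) :
    (1 + b) ^ p ≤ 2 ^ p * (1 + b ^ p) := by
  have h0 : 0 ≤ b ^ p := by positivity
  rcases le_total b 1 with h | h
  · calc (1 + b) ^ p ≤ 2 ^ p := Real.rpow_le_rpow (by positivity) (by linarith) hp.le
      _ ≤ _ := le_mul_of_one_le_right (by positivity) (by linarith)
  · calc (1 + b) ^ p ≤ (2 * b) ^ p := Real.rpow_le_rpow (by positivity) (by linarith) hp.le
      _ = 2 ^ p * b ^ p := Real.mul_rpow (by positivity) hb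
      _ ≤ _ := by gcongr; linarith

lemma aux_main.{u, v} (q p s r : ℝ) (q' : ℝ≥0∞)
    (hq1 : 1 ≤ q) (hq2 : q < 2) (hconj : 1 / ENNReal.ofReal q + 1 / q' = 1)
    (hpq : 1 / r = 1 / q - 1 / 2) (hqp : q ≤ p) (hppq : p < r)
    (hs : 1 / s = (1 / q').toReal + (1 - 2 * (1 / q').toReal) * (1 / q - 1 / p))
    (hs2 : 2 < s) (C : ℝ≥0) (n k N : ℕ) (hN : 0 < N)
    {τ : Type} [Fintype τ] (hτ : Fintype.card τ ≤ n) (A B : Fin N → τ → ℝ) (η : ℝ) (hη : 0 ≤ η)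
    (hdiag : ∀ i, ∑ t, A i t * B i t = 1) (hoff : ∀ i j, i ≠ j → |∑ t, A i t * B j t| ≤ η)
    (hsmall : (2 * C * η) ^ p * (N : ℝ) ^ (p / s) ≤ 1 / 2)
    (h : ∀ (X : Type u) (Y : Type v) [NormedAddCommGroup X] [NormedSpace ℝ X] [CompleteSpace X]
        [NormedAddCommGroup Y] [NormedSpace ℝ Y] [CompleteSpace Y]
        (T : X →L[ℝ] Y), RankLE T n →
          piPQ (ENNReal.ofReal p) (ENNReal.ofReal q) T ≤
            (C : ℝ≥0∞) * piN (ENNReal.ofReal p) (ENNReal.ofReal q) k T) :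
    (N : ℝ) ≤ 2 * (2 * C) ^ p * k := by
  obtain ⟨h1, ha, hD⟩ := aux_conj q q' hq1 hconj
  have : Fact (1 ≤ q') := ⟨h1⟩
  rw [ha] at hs
  have hq0 : 0 < q := by linarith
  have hp0 : 0 < p := by linarith
  have hs0 : 0 < s := by linarith
  have hN0 : (0 : ℝ) < N := by exact_mod_cast hN
  let X := PiLp q' (fun _ : ULift.{u} (Fin N) => ℝ)
  let Y := ULift.{v} (Fin N) → ℝ
  let R : X →ₗ[ℝ] (τ → ℝ) := LinearMap.pi fun t => auxFun q' fun i => B i.down t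
  let S : (τ → ℝ) →ₗ[ℝ] Y := LinearMap.pi fun c => auxFun' fun t => A c.down t
  let T : X →L[ℝ] Y := LinearMap.toContinuousLinearMap (S ∘ₗ R)
  have hT : ∀ (x : X) c, T x c = ∑ i : ULift.{u} (Fin N), (∑ t, A c.down t * B i.down t) * x i := by
    intro x c
    change ∑ t, A c.down t * ∑ i, B i.down t * x i = _
    simp_rw [Finset.mul_sum, Finset.sum_mul]
    rw [Finset.sum_comm]
    exact Finset.sum_congr rfl fun i _ => Finset.sum_congr rfl fun t _ => by ring
  have hrank : RankLE T n := by
    have hle : LinearMap.range (T : X →ₗ[ℝ] Y) ≤ LinearMap.range S := by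
      rintro _ ⟨x, rfl⟩
      exact ⟨R x, rfl⟩
    refine ⟨inferInstance, ?_⟩
    calc _ ≤ Module.finrank ℝ (LinearMap.range S) := Submodule.finrank_mono hle
      _ ≤ Module.finrank ℝ (τ → ℝ) := LinearMap.finrank_range_le S
      _ ≤ n := by simpa using hτ
  have hmain := h X Y T hrank
  -- lower bound
  have hlow : ENNReal.ofReal ((N : ℝ) ^ (1 / p)) ≤ piPQ (ENNReal.ofReal p) (ENNReal.ofReal q) T := by
    let e : Fin N → X := fun i => PiLp.single q' (ULift.up i) 1
    have hw : weakLq (ENNReal.ofReal q) e ≤ 1 := by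
      rw [aux_weak q hq0]
      intro f hf
      refine le_trans (le_of_eq ?_) (aux_A q q' hD f hf)
      exact (Equiv.ulift.symm : Fin N ≃ ULift.{u} (Fin N)).sum_comp
        (fun i => |f (PiLp.single q' i 1)| ^ q)
    refine le_trans ?_ (le_iSup _ N)
    refine le_trans ?_ (le_iSup (fun x : {x : Fin N → X // weakLq (ENNReal.ofReal q) x ≤ 1} =>
      eSum (ENNReal.ofReal p) fun k => ENNReal.ofReal ‖T (x.1 k)‖) ⟨e, hw⟩)
    rw [aux_eSum p hp0 _ (fun _ => norm_nonneg _)]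
    apply ENNReal.ofReal_le_ofReal
    refine Real.rpow_le_rpow hN0.le ?_ (by positivity)
    have : ∀ i, (1 : ℝ) ≤ ‖T (e i)‖ ^ p := by
      intro i
      apply Real.one_le_rpow _ hp0.le
      have h2 := norm_le_pi_norm (T (e i)) (ULift.up i)
      refine le_trans (le_of_eq ?_) h2
      rw [hT]
      have : ∀ j : ULift.{u} (Fin N), (∑ t, A i t * B j.down t) * (e i) j =
          if j = ULift.up i then 1 else 0 := by
        intro j
        by_cases hj : j = ULift.up i
        · subst hj; simp [e, hdiag]
        · simp [e, hj]
      rw [Finset.sum_congr rfl fun j _ => this j]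
      simp
    calc (N : ℝ) = ∑ i : Fin N, (1 : ℝ) := by simp
      _ ≤ _ := Finset.sum_le_sum fun i _ => this i
  -- upper bound
  have hup : piN (ENNReal.ofReal p) (ENNReal.ofReal q) k T ≤
      ENNReal.ofReal ((2 ^ p * (k + η ^ p * (N : ℝ) ^ (p / s + 1))) ^ (1 / p)) := by
    refine iSup_le fun x => ?_
    obtain ⟨x, hw⟩ := x
    rw [aux_weak q hq0] at hw
    simp only
    rw [aux_eSum p hp0 _ (fun _ => norm_nonneg _)]
    apply ENNReal.ofReal_le_ofReal
    refine Real.rpow_le_rpow (Finset.sum_nonneg fun _ _ => by positivity) ?_ (by positivity)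
    have hx : ∀ g : ULift.{u} (Fin N) → ℝ, ∑ i, |g i| ^ q ≤ 1 →
        ∑ j, |∑ i, g i * x j i| ^ q ≤ 1 := by
      intro g hg
      exact hw ((auxFun q' g).mkContinuous 1 fun y => by
          rw [one_mul]; exact aux_B q q' hD g hg y)
        (LinearMap.mkContinuous_norm_le _ zero_le_one _)
    have hone := aux_one q r p s hq1 hq2 hpq hqp hppq hs0 hs (by simpa using hN)
      (fun j => (x j).ofLp) hx
    have hent : ∀ j i, |x j i| ≤ 1 := by
      intro j i
      have h3 := hx (Pi.single i 1) (by
        rw [Finset.sum_eq_single i]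
        · simp
        · intro b _ hb; simp [Pi.single_eq_of_ne hb, hq0.ne']
        · simp)
      have h4 : |x j i| ^ q ≤ 1 := by
        refine le_trans ?_ h3
        refine le_trans (le_of_eq ?_) (Finset.single_le_sum
          (f := fun j => |∑ l, (Pi.single i 1 : ULift.{u} (Fin N) → ℝ) l * x j l| ^ q)
          (fun j _ => by positivity) (Finset.mem_univ j))
        simp [Pi.single_apply]
      by_contra! hgt
      exact absurd h4 (not_le.2 (Real.one_lt_rpow hgt hq0))
    have hTn : ∀ j, ‖T (x j)‖ ≤ 1 + η * ∑ i, |x j i| := by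
      intro j
      have hb0 : 0 ≤ ∑ i, |x j i| := Finset.sum_nonneg fun i _ => abs_nonneg _
      rw [pi_norm_le_iff_of_nonneg (by positivity)]
      intro c
      rw [hT, Real.norm_eq_abs]
      refine (Finset.abs_sum_le_sum_abs _ _).trans ?_
      calc _ ≤ ∑ i : ULift.{u} (Fin N), ((if i = ULift.up c.down then (1 : ℝ) else 0)
              + η * |x j i|) := by
            refine Finset.sum_le_sum fun i _ => ?_
            rw [abs_mul]
            by_cases hi : i = ULift.up c.down
            · subst hi
              simp only [hdiag, if_true]
              have := hent j (ULift.up c.down)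
              have h0 := abs_nonneg (x j (ULift.up c.down))
              have : 0 ≤ η * |x j (ULift.up c.down)| := by positivity
              simp only [abs_one, one_mul]
              linarith
            · rw [if_neg hi, zero_add]
              refine mul_le_mul_of_nonneg_right (hoff _ _ ?_) (abs_nonneg _)
              intro hc
              exact hi (by rw [hc])
        _ = _ := by rw [Finset.sum_add_distrib, ← Finset.mul_sum]; simp
    calc ∑ j, ‖T (x j)‖ ^ p ≤ ∑ j, 2 ^ p * (1 + η ^ p * (∑ i, |x j i|) ^ p) := by
          refine Finset.sum_le_sum fun j _ => ?_
          have hb0 : 0 ≤ ∑ i, |x j i| := Finset.sum_nonneg fun i _ => abs_nonneg _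
          refine (Real.rpow_le_rpow (norm_nonneg _) (hTn j) hp0.le).trans ?_
          rw [← Real.mul_rpow hη hb0]
          have hb1 : 0 ≤ η * ∑ i, |x j i| := mul_nonneg hη hb0
          exact aux_add_rpow p hp0 _ hb1
      _ = 2 ^ p * (k + η ^ p * ∑ j, (∑ i, |x j i|) ^ p) := by
          rw [← Finset.mul_sum, Finset.sum_add_distrib, ← Finset.mul_sum]; simp
      _ ≤ _ := by
          have : (Fintype.card (ULift.{u} (Fin N)) : ℝ) = N := by simp
          rw [this] at hone
          gcongr
  set D : ℝ := 2 ^ p * (k + η ^ p * (N : ℝ) ^ (p / s + 1)) with hDdef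
  have hD0 : 0 ≤ D := by positivity
  have hfin : (N : ℝ) ^ (1 / p) ≤ C * D ^ (1 / p) := by
    have h5 := (hlow.trans hmain).trans (mul_le_mul_right hup (C : ℝ≥0∞))
    rw [← ENNReal.ofReal_coe_nnreal, ← ENNReal.ofReal_mul (by positivity)] at h5
    exact (ENNReal.ofReal_le_ofReal_iff (by positivity)).1 h5
  have hfin2 : (N : ℝ) ≤ C ^ p * D := by
    have h6 := Real.rpow_le_rpow (by positivity) hfin hp0.le
    rw [Real.mul_rpow (by positivity) (by positivity), ← Real.rpow_mul hN0.le,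
      ← Real.rpow_mul hD0, one_div_mul_cancel hp0.ne', Real.rpow_one, Real.rpow_one] at h6
    exact h6
  have e1 : (C : ℝ) ^ p * D = (2 * C) ^ p * k + ((2 * C * η) ^ p * (N : ℝ) ^ (p / s)) * N := by
    rw [hDdef, Real.rpow_add_one hN0.ne', Real.mul_rpow (by positivity) hη,
      Real.mul_rpow (by positivity) (by positivity)]
    ring
  rw [e1] at hfin2
  nlinarith

lemma aux_prime (n : ℕ) (hn : 4 ≤ n) : ∃ m : ℕ, m.Prime ∧ m * m ≤ n ∧ n < 4 * (m * m) := by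
  have h2 : 2 ≤ Nat.sqrt n := by rw [Nat.le_sqrt]; omega
  obtain ⟨m, hm, h3, h4⟩ := Nat.exists_prime_lt_and_le_two_mul (Nat.sqrt n / 2) (by omega)
  refine ⟨m, hm, Nat.le_sqrt.1 (by omega), ?_⟩
  have h5 : n < (Nat.sqrt n + 1) * (Nat.sqrt n + 1) := Nat.lt_succ_sqrt n
  have h6 : Nat.sqrt n + 1 ≤ 2 * m := by omega
  nlinarith

/-- for `1 ≤ q < 2`, `q ≤ p < p_q` (with `1/p_q = 1/q - 1/2`) and
`2 < s` defined by `1/s = 1/q' + (1 - 2/q')(1/q - 1/p)`, any sequence `k_n`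
satisfying `π_{p,q}(T) ≤ C π_{p,q}^{k_n}(T)` for all rank-`n` operators must
satisfy `n^{s/2} ≤ c₁ e^{c₁ √(1 + ln n)} k_n`. -/
theorem statement17 (q p s pq : ℝ) (q' : ℝ≥0∞)
    (hq1 : 1 ≤ q) (hq2 : q < 2) (hconj : 1 / ENNReal.ofReal q + 1 / q' = 1)
    (hpq : 1 / pq = 1 / q - 1 / 2) (hqp : q ≤ p) (hppq : p < pq)
    (hs : 1 / s = (1 / q').toReal + (1 - 2 * (1 / q').toReal) * (1 / q - 1 / p))
    (hs2 : 2 < s) :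
    ∀ (C : ℝ≥0), 0 < C → ∀ k : ℕ → ℕ,
      (∀ (n : ℕ) (X Y : Type*) [NormedAddCommGroup X] [NormedSpace ℝ X] [CompleteSpace X]
        [NormedAddCommGroup Y] [NormedSpace ℝ Y] [CompleteSpace Y]
        (T : X →L[ℝ] Y), RankLE T n →
          piPQ (ENNReal.ofReal p) (ENNReal.ofReal q) T ≤
            (C : ℝ≥0∞) * piN (ENNReal.ofReal p) (ENNReal.ofReal q) (k n) T) →
      ∃ c₁ : ℝ, 0 < c₁ ∧
        ∀ n : ℕ, (n : ℝ) ^ (s / 2) ≤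
          c₁ * Real.exp (c₁ * Real.sqrt (1 + Real.log n)) * k n := by
  intro C hC k h
  have hp0 : 0 < p := by linarith
  have hs0 : 0 < s := by linarith
  have hp1 : 1 ≤ p := by linarith
  have hC0 : (0 : ℝ) < C := by exact_mod_cast hC
  set d : ℕ := ⌈s⌉₊ with hd
  have hd1 : 1 ≤ d := Nat.one_le_ceil_iff.2 hs0
  have hd1' : (1 : ℝ) ≤ d := by exact_mod_cast hd1
  -- the constant
  set K : ℝ := 4 * (C + 1) * d with hK
  have hK1 : 1 ≤ K := by nlinarith
  set Q : ℝ := 2 * (2 * C) ^ p with hQ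
  have hQ0 : 0 < Q := by positivity
  -- one vector
  have hone : ∀ n : ℕ, 1 ≤ n → 1 ≤ Q * k n := by
    intro n hn
    have := aux_main q p s pq q' hq1 hq2 hconj hpq hqp hppq hs hs2 C n (k n) 1 one_pos
      (τ := Unit) (by simpa using hn) (fun _ _ => 1) (fun _ _ => 1) 0 le_rfl (by simp)
      (fun i j hij => absurd (Subsingleton.elim i j) hij)
      (by simp [Real.zero_rpow hp0.ne']) (h n)
    simpa using this
  have hbig : ∀ n : ℕ, (n : ℝ) ^ (s / 2) ≤ 2 * (2 * K) ^ s * Q * k n := by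
    intro n
    rcases Nat.eq_zero_or_pos n with rfl | hn
    · rw [Nat.cast_zero, Real.zero_rpow (by positivity)]; positivity
    have hk := hone n hn
    have hKs : 1 ≤ K ^ s := Real.one_le_rpow hK1 hs0.le
    -- it suffices to bound by the square of a multiple of a scale
    have hred : ∀ m : ℝ, 0 ≤ m → (n : ℝ) ≤ (2 * m) ^ 2 →
        (n : ℝ) ^ (s / 2) ≤ (2 * m) ^ s := by
      intro m hm hnm
      calc (n : ℝ) ^ (s / 2) ≤ ((2 * m) ^ 2) ^ (s / 2) :=
            Real.rpow_le_rpow (by positivity) hnm (by positivity)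
        _ = (2 * m) ^ s := by
            rw [← Real.rpow_natCast, ← Real.rpow_mul (by positivity)]
            congr 1; push_cast; ring
    have hsmallcase : (n : ℝ) ≤ (2 * K) ^ 2 → (n : ℝ) ^ (s / 2) ≤ 2 * (2 * K) ^ s * Q * k n := by
      intro hnK
      have h1 := hred K (by positivity) hnK
      have h2 : (0 : ℝ) < (2 * K) ^ s := by positivity
      nlinarith
    by_cases hn4 : n < 4
    · apply hsmallcase
      have : (n : ℝ) < 4 := by exact_mod_cast hn4
      nlinarith
    obtain ⟨m, hm, hmn, hnm⟩ := aux_prime n (by omega)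
    have hnm' : (n : ℝ) ≤ (2 * m) ^ 2 := by
      have : (n : ℝ) < 4 * (m * m) := by exact_mod_cast hnm
      nlinarith
    have hm0 : (0 : ℝ) < m := by exact_mod_cast hm.pos
    by_cases hmK : (m : ℝ) < K
    · apply hsmallcase
      nlinarith
    push Not at hmK
    set N : ℕ := ⌊((m : ℝ) / K) ^ s⌋₊ with hN
    have hmK1 : 1 ≤ (m : ℝ) / K := by rw [le_div_iff₀ (by positivity)]; linarith
    have hpow1 : 1 ≤ ((m : ℝ) / K) ^ s := Real.one_le_rpow hmK1 hs0.le
    have hN1 : 1 ≤ N := Nat.one_le_floor_iff _ |>.2 hpow1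
    have hN1' : (1 : ℝ) ≤ N := by exact_mod_cast hN1
    have hNle : (N : ℝ) ≤ ((m : ℝ) / K) ^ s := Nat.floor_le (by positivity)
    have hNge : ((m : ℝ) / K) ^ s ≤ 2 * N := by
      have := Nat.lt_floor_add_one (((m : ℝ) / K) ^ s)
      rw [← hN] at this
      linarith
    have hNmd : N ≤ m ^ d := by
      have : (N : ℝ) ≤ (m : ℝ) ^ d := by
        have hm1 : (1 : ℝ) ≤ m := hK1.trans hmK
        calc (N : ℝ) ≤ ((m : ℝ) / K) ^ s := hNle
          _ ≤ (m : ℝ) ^ s := by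
              apply Real.rpow_le_rpow (by positivity) _ hs0.le
              exact div_le_self hm0.le hK1
          _ ≤ (m : ℝ) ^ (d : ℝ) := Real.rpow_le_rpow_of_exponent_le hm1 (Nat.le_ceil s)
          _ = (m : ℝ) ^ d := Real.rpow_natCast _ _
      exact_mod_cast this
    have : Fact m.Prime := ⟨hm⟩
    obtain ⟨A, hA1, hA2⟩ := aux_code m d N hNmd
    have hmain := aux_main q p s pq q' hq1 hq2 hconj hpq hqp hppq hs hs2 C n (k n) N hN1
      (τ := ZMod m × ZMod m) (by simpa [ZMod.card] using hmn) A (fun i t => A i t / m) (d / m)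
      (by positivity)
      (fun i => by
        simp_rw [← mul_div_assoc]
        rw [← Finset.sum_div, hA1, div_self hm0.ne'])
      (fun i j hij => by
        simp_rw [← mul_div_assoc]
        rw [← Finset.sum_div, abs_div, abs_of_pos hm0]
        exact div_le_div_of_nonneg_right (hA2 i j hij) hm0.le)
      (by
        have e1 : (N : ℝ) ^ (p / s) ≤ ((m : ℝ) / K) ^ p := by
          calc (N : ℝ) ^ (p / s) ≤ (((m : ℝ) / K) ^ s) ^ (p / s) :=
                Real.rpow_le_rpow (by positivity) hNle (by positivity)
            _ = _ := by
                rw [← Real.rpow_mul (by positivity)]; congr 1; field_simp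
        calc (2 * C * (d / m)) ^ p * (N : ℝ) ^ (p / s)
            ≤ (2 * C * (d / m)) ^ p * ((m : ℝ) / K) ^ p := by gcongr
          _ = (2 * C * (d / m) * (m / K)) ^ p := by
              rw [← Real.mul_rpow (by positivity) (by positivity)]
          _ ≤ (1 / 2 : ℝ) ^ p := by
              apply Real.rpow_le_rpow (by positivity) _ hp0.le
              have : 2 * (C : ℝ) * (d / m) * (m / K) = 2 * C * d / K := by field_simp
              rw [this, div_le_iff₀ (by positivity), hK]
              nlinarith
          _ ≤ (1 / 2 : ℝ) ^ (1 : ℝ) :=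
              Real.rpow_le_rpow_of_exponent_ge (by norm_num) (by norm_num) hp1
          _ = 1 / 2 := Real.rpow_one _)
      (h n)
    rw [← hQ] at hmain
    have e2 : (2 * (m : ℝ)) ^ s = (2 * K) ^ s * ((m : ℝ) / K) ^ s := by
      rw [← Real.mul_rpow (by positivity) (by positivity)]
      congr 1; field_simp
    have h3 := hred m hm0.le hnm'
    rw [e2] at h3
    calc (n : ℝ) ^ (s / 2) ≤ (2 * K) ^ s * ((m : ℝ) / K) ^ s := h3
      _ ≤ (2 * K) ^ s * (2 * (Q * k n)) := by
          apply mul_le_mul_of_nonneg_left _ (by positivity)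
          linarith
      _ = _ := by ring
  refine ⟨2 * (2 * K) ^ s * Q, by positivity, fun n => (hbig n).trans ?_⟩
  have hexp : 1 ≤ Real.exp (2 * (2 * K) ^ s * Q * Real.sqrt (1 + Real.log n)) :=
    Real.one_le_exp (by positivity)
  have hc0 : 0 ≤ 2 * (2 * K) ^ s * Q := by positivity
  exact mul_le_mul_of_nonneg_right (le_mul_of_one_le_right hc0 hexp) (Nat.cast_nonneg _)

end
end

section
/- Let 1 ≤ p < 2 ≤ s < p' ≤ ∞, where p' is the conjugate exponent of p. There is an absolute constant c₀ such that for every n ∈ ℕ there exists a bounded linear operator T : ℓ_∞^{m} → ℓ_2^n with m = ⌊n^{s/2}⌋ and π_{p,1}(T) > 0 satisfying π_p^k(T) ≤ c₀ · √s · (k / n^{s/2})^{1/s − 1/p'} · π_{p,1}(T) for all k ∈ ℕ. -/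
open scoped ENNReal NNReal BigOperators

noncomputable section

def sgn (b : Bool) : ℝ := if b then 1 else -1

lemma sum_exp_eq {n : ℕ} (x : Fin n → ℝ) (t : ℝ) :
    ∑ ε : Fin n → Bool, Real.exp (t * ∑ i, sgn (ε i) * x i)
      = ∏ i, (Real.exp (t * x i) + Real.exp (-(t * x i))) := by
  have h : ∀ i, Real.exp (t * x i) + Real.exp (-(t * x i))
      = ∑ b : Bool, Real.exp (t * (sgn b * x i)) := by
    intro i
    simp [sgn]
  simp_rw [h]
  rw [Finset.prod_univ_sum]
  simp only [Fintype.piFinset_univ]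
  refine Finset.sum_congr rfl fun ε _ => ?_
  rw [← Real.exp_sum, Finset.mul_sum]

lemma sum_exp_le {n : ℕ} (x : Fin n → ℝ) (hx : ∑ i, x i ^ 2 ≤ 1) (t : ℝ) :
    ∑ ε : Fin n → Bool, Real.exp (t * ∑ i, sgn (ε i) * x i)
      ≤ 2 ^ n * Real.exp (t ^ 2 / 2) := by
  rw [sum_exp_eq]
  calc ∏ i, (Real.exp (t * x i) + Real.exp (-(t * x i)))
      ≤ ∏ i : Fin n, (2 * Real.exp ((t * x i) ^ 2 / 2)) := by
        refine Finset.prod_le_prod (fun i _ => by positivity) fun i _ => ?_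
        have := Real.cosh_le_exp_half_sq (t * x i)
        rw [Real.cosh_eq] at this
        linarith
    _ = 2 ^ n * Real.exp (∑ i, (t * x i) ^ 2 / 2) := by
        rw [Finset.prod_mul_distrib, Real.exp_sum]; simp
    _ ≤ _ := by
        gcongr
        have : ∑ i, (t * x i) ^ 2 / 2 = t ^ 2 / 2 * ∑ i, x i ^ 2 := by
          rw [Finset.mul_sum]; exact Finset.sum_congr rfl fun i _ => by ring
        rw [this]
        have := mul_le_mul_of_nonneg_left hx (show 0 ≤ t ^ 2 / 2 by positivity)
        linarith

lemma quad_int (y : ℝ) : MeasureTheory.Integrable (fun t : ℝ => Real.exp (t * y - t ^ 2)) ∧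
    ∫ t : ℝ, Real.exp (t * y - t ^ 2) = Real.sqrt Real.pi * Real.exp (y ^ 2 / 4) := by
  have h : (fun t : ℝ => Real.exp (t * y - t ^ 2))
      = fun t : ℝ => Real.exp (y ^ 2 / 4) * Real.exp (-1 * (t - y / 2) ^ 2) := by
    funext t
    rw [← Real.exp_add]; congr 1; ring
  have hi : MeasureTheory.Integrable (fun t : ℝ => Real.exp (-1 * t ^ 2)) :=
    integrable_exp_neg_mul_sq one_pos
  rw [h]
  refine ⟨(hi.comp_sub_right (y / 2)).const_mul _, ?_⟩
  rw [MeasureTheory.integral_const_mul,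
    MeasureTheory.integral_sub_right_eq_self (fun t : ℝ => Real.exp (-1 * t ^ 2)) (y / 2),
    integral_gaussian]
  simp [mul_comm]

lemma subgauss {n : ℕ} (x : Fin n → ℝ) (hx : ∑ i, x i ^ 2 ≤ 1) :
    ∑ ε : Fin n → Bool, Real.exp ((∑ i, sgn (ε i) * x i) ^ 2 / 4) ≤ 2 ^ n * 2 := by
  have hpi : 0 < Real.sqrt Real.pi := Real.sqrt_pos.2 Real.pi_pos
  have h1 : ∑ ε : Fin n → Bool, Real.sqrt Real.pi * Real.exp ((∑ i, sgn (ε i) * x i) ^ 2 / 4)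
      ≤ 2 ^ n * Real.sqrt (Real.pi / (1/2)) := by
    rw [← integral_gaussian, ← MeasureTheory.integral_const_mul]
    simp_rw [← (quad_int _).2]
    rw [← MeasureTheory.integral_finsetSum _ (fun i _ => (quad_int _).1)]
    refine MeasureTheory.integral_mono (MeasureTheory.integrable_finsetSum _ (fun i _ => (quad_int _).1))
      ((integrable_exp_neg_mul_sq (by norm_num)).const_mul _) fun t => ?_
    have := mul_le_mul_of_nonneg_right (sum_exp_le x hx t) (Real.exp_pos (- t ^ 2)).le
    simp only
    rw [Finset.sum_mul, mul_assoc, ← Real.exp_add] at this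
    simp_rw [← Real.exp_add] at this
    convert this using 3 <;> ring_nf
  rw [← Finset.mul_sum] at h1
  have h2 : Real.sqrt (Real.pi / (1/2)) ≤ Real.sqrt Real.pi * 2 := by
    rw [Real.sqrt_le_left (by positivity), mul_pow, Real.sq_sqrt Real.pi_pos.le]
    linarith [Real.pi_pos]
  have h3 : (2:ℝ) ^ n * Real.sqrt (Real.pi / (1/2)) ≤ 2 ^ n * (Real.sqrt Real.pi * 2) := by gcongr
  nlinarith

lemma net (n : ℕ) : ∃ N : Finset (EuclideanSpace ℝ (Fin n)), N.card ≤ 5 ^ n ∧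
    (∀ c ∈ N, ‖c‖ ≤ 1) ∧ ∀ u : EuclideanSpace ℝ (Fin n), ‖u‖ ≤ 1 → ∃ c ∈ N, ‖u - c‖ ≤ 1 / 2 := by
  classical
  let P : Finset (EuclideanSpace ℝ (Fin n)) → Prop := fun N =>
    (∀ c ∈ N, ‖c‖ ≤ 1) ∧ ∀ c ∈ N, ∀ d ∈ N, c ≠ d → 1 / 2 ≤ ‖c - d‖
  have hcard : ∀ N, P N → N.card ≤ 5 ^ n := by
    intro N hN
    have inj : Function.Injective (fun c : EuclideanSpace ℝ (Fin n) => (2:ℝ) • c) :=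
      smul_right_injective _ two_ne_zero
    have := Besicovitch.card_le_of_separated (N.image fun c => (2:ℝ) • c)
      (by
        intro c hc
        obtain ⟨d, hd, rfl⟩ := Finset.mem_image.1 hc
        have := hN.1 d hd
        rw [norm_smul]; norm_num; linarith)
      (by
        intro c hc d hd hcd
        obtain ⟨c, hc1, rfl⟩ := Finset.mem_image.1 hc
        obtain ⟨d, hd1, rfl⟩ := Finset.mem_image.1 hd
        have := hN.2 c hc1 d hd1 (fun h => hcd (by rw [h]))
        rw [← smul_sub, norm_smul]; norm_num; linarith)
    rw [Finset.card_image_of_injective _ inj] at this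
    simpa using this
  let Q : ℕ → Prop := fun k => ∃ N, P N ∧ N.card = k
  have hQ0 : Q 0 := ⟨∅, by simp [P], rfl⟩
  obtain ⟨N, hN, hNc⟩ : Q (Nat.findGreatest Q (5 ^ n)) := Nat.findGreatest_spec (Nat.zero_le _) hQ0
  refine ⟨N, hcard N hN, hN.1, fun u hu => ?_⟩
  by_contra! hcon
  have huN : u ∉ N := fun h => by have := hcon u h; simp at this; linarith
  have hP : P (insert u N) := by
    refine ⟨?_, ?_⟩
    · intro c hc
      rcases Finset.mem_insert.1 hc with rfl | hc
      · exact hu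
      · exact hN.1 c hc
    · intro c hc d hd hcd
      rcases Finset.mem_insert.1 hc with hc1 | hc1 <;>
        rcases Finset.mem_insert.1 hd with hd1 | hd1
      · exact absurd (hc1.trans hd1.symm) hcd
      · rw [hc1]; exact (hcon d hd1).le
      · rw [norm_sub_rev, hd1]; exact (hcon c hc1).le
      · exact hN.2 c hc1 d hd1 hcd
  have := Nat.le_findGreatest (hcard _ hP) (show Q _ from ⟨_, hP, rfl⟩)
  rw [Finset.card_insert_of_notMem huN] at this
  omega

lemma pow_le_exp (s : ℝ) (hs : 2 ≤ s) (y : ℝ) :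
    |y| ^ s ≤ (4 * s) ^ (s / 2) * Real.exp (y ^ 2 / 8) := by
  have h0 : |y| ^ s = (y ^ 2) ^ (s / 2) := by
    rw [← sq_abs, ← Real.rpow_natCast, ← Real.rpow_mul (abs_nonneg y)]
    congr 1; push_cast; ring
  have h1 : y ^ 2 = (4 * s) * (y ^ 2 / (4 * s)) := by field_simp
  rw [h0]
  nth_rewrite 1 [h1]
  rw [Real.mul_rpow (by positivity) (by positivity)]
  gcongr
  calc (y ^ 2 / (4 * s)) ^ (s / 2) ≤ (Real.exp (y ^ 2 / (4 * s))) ^ (s / 2) := by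
        gcongr
        linarith [Real.add_one_le_exp (y ^ 2 / (4 * s))]
    _ = Real.exp (y ^ 2 / 8) := by
        rw [← Real.exp_mul]; congr 1; field_simp; ring

def phi (l s y : ℝ) : ℝ := min (l * |y| ^ s) (y ^ 2 / 8)

lemma exp_phi_le (l s : ℝ) (hl : 0 ≤ l) (hs : 2 ≤ s) (y : ℝ) :
    Real.exp (phi l s y) ≤ 1 + l * (4 * s) ^ (s / 2) * Real.exp (y ^ 2 / 4) := by
  have h0 : 0 ≤ phi l s y := le_min (by positivity) (by positivity)
  have h1 : Real.exp (phi l s y) ≤ 1 + phi l s y * Real.exp (phi l s y) := by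
    have := Real.add_one_le_exp (-(phi l s y))
    have h2 := mul_le_mul_of_nonneg_right this (Real.exp_pos (phi l s y)).le
    rw [← Real.exp_add] at h2
    simp at h2
    linarith
  refine h1.trans ?_
  have h3 : phi l s y * Real.exp (phi l s y) ≤ (l * |y| ^ s) * Real.exp (y ^ 2 / 8) :=
    mul_le_mul (min_le_left _ _) (Real.exp_le_exp.2 (min_le_right _ _)) (Real.exp_pos _).le
      (by positivity)
  have h4 : (l * |y| ^ s) * Real.exp (y ^ 2 / 8)
      ≤ (l * ((4 * s) ^ (s / 2) * Real.exp (y ^ 2 / 8))) * Real.exp (y ^ 2 / 8) := by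
    gcongr
    exact pow_le_exp s hs y
  have h5 : Real.exp (y ^ 2 / 4) = Real.exp (y ^ 2 / 8) * Real.exp (y ^ 2 / 8) := by
    rw [← Real.exp_add]; congr 1; ring
  rw [h5]
  linarith

def Y {n : ℕ} (e : Fin n → Bool) (x : Fin n → ℝ) : ℝ := ∑ i, sgn (e i) * x i

lemma row_le {n : ℕ} (x : Fin n → ℝ) (hx : ∑ i, x i ^ 2 ≤ 1) (l s : ℝ) (hl : 0 ≤ l) (hs : 2 ≤ s) :
    ∑ e : Fin n → Bool, Real.exp (phi l s (Y e x)) ≤ 2 ^ n * (1 + 2 * l * (4 * s) ^ (s / 2)) := by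
  calc _ ≤ ∑ e : Fin n → Bool, (1 + l * (4 * s) ^ (s / 2) * Real.exp ((Y e x) ^ 2 / 4)) :=
        Finset.sum_le_sum fun e _ => exp_phi_le l s hl hs _
    _ = 2 ^ n + l * (4 * s) ^ (s / 2) * ∑ e : Fin n → Bool, Real.exp ((Y e x) ^ 2 / 4) := by
        rw [Finset.sum_add_distrib, Finset.mul_sum]; simp
    _ ≤ 2 ^ n + l * (4 * s) ^ (s / 2) * (2 ^ n * 2) := by
        gcongr
        exact subgauss x hx
    _ = _ := by ring

lemma exists_signs {n m : ℕ} (hm : 0 < m) (N : Finset (EuclideanSpace ℝ (Fin n)))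
    (hN : N.card ≤ 5 ^ n) (hN1 : ∀ c ∈ N, ‖c‖ ≤ 1) (l s : ℝ) (hl : 0 ≤ l) (hs : 2 ≤ s)
    (hls : 2 * l * (4 * s) ^ (s / 2) = n / m) :
    ∃ ε : Fin m → Fin n → Bool, ∀ c ∈ N, ∑ j, phi l s (Y (ε j) c) ≤ 3 * n := by
  have hm' : (0:ℝ) < m := by exact_mod_cast hm
  have hc : ∀ c ∈ N, ∑ ε : Fin m → Fin n → Bool, ∏ j, Real.exp (phi l s (Y (ε j) c))
      ≤ (2 ^ n) ^ m * Real.exp n := by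
    intro c hcN
    have hx : ∑ i, c i ^ 2 ≤ 1 := by
      have := hN1 c hcN
      rw [← EuclideanSpace.real_norm_sq_eq]
      nlinarith [norm_nonneg c]
    have hp := Finset.prod_univ_sum (fun _ : Fin m => (Finset.univ : Finset (Fin n → Bool)))
      (fun _ e => Real.exp (phi l s (Y e c)))
    simp only [Fintype.piFinset_univ] at hp
    rw [← hp]
    calc _ ≤ ∏ j : Fin m, (2 ^ n * Real.exp (n / m : ℝ)) := by
          refine Finset.prod_le_prod (fun i _ => by positivity) fun i _ => ?_
          refine (row_le c hx l s hl hs).trans ?_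
          rw [hls]
          gcongr
          linarith [Real.add_one_le_exp (n / m : ℝ)]
      _ = _ := by
          simp only [Finset.prod_const, Finset.card_univ, Fintype.card_fin]
          rw [mul_pow, ← Real.exp_nat_mul]
          congr 2; field_simp
  have htot : ∑ ε : Fin m → Fin n → Bool, ∑ c ∈ N, ∏ j, Real.exp (phi l s (Y (ε j) c))
      ≤ ∑ ε : Fin m → Fin n → Bool, (5 ^ n * Real.exp n) := by
    rw [Finset.sum_comm]
    refine (Finset.sum_le_sum hc).trans ?_
    simp only [Finset.sum_const, Finset.card_univ, nsmul_eq_mul]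
    have : (Fintype.card (Fin m → Fin n → Bool) : ℝ) = (2 ^ n) ^ m := by simp
    rw [this]
    have h5 : (N.card : ℝ) ≤ 5 ^ n := by exact_mod_cast hN
    have := mul_le_mul_of_nonneg_right h5 (show 0 ≤ ((2:ℝ) ^ n) ^ m * Real.exp n by positivity)
    linarith
  obtain ⟨ε, -, hε⟩ := Finset.exists_le_of_sum_le Finset.univ_nonempty htot
  refine ⟨ε, fun c hcN => ?_⟩
  have h1 : ∏ j, Real.exp (phi l s (Y (ε j) c)) ≤ 5 ^ n * Real.exp n :=
    (Finset.single_le_sum (f := fun c : EuclideanSpace ℝ (Fin n) =>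
      ∏ j, Real.exp (phi l s (Y (ε j) c))) (fun _ _ => by positivity) hcN).trans hε
  rw [← Real.exp_sum] at h1
  have h2 : (5:ℝ) ^ n ≤ Real.exp (2 * n) := by
    rw [mul_comm, Real.exp_nat_mul]
    gcongr
    have : Real.exp 2 = Real.exp 1 * Real.exp 1 := by rw [← Real.exp_add]; norm_num
    nlinarith [Real.exp_one_gt_d9]
  have h3 : (5:ℝ) ^ n * Real.exp n ≤ Real.exp (3 * n) := by
    have : Real.exp (3 * n : ℝ) = Real.exp (2 * n) * Real.exp n := by
      rw [← Real.exp_add]; congr 1; ring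
    rw [this]; gcongr
  exact Real.exp_le_exp.1 (h1.trans h3)

lemma det_bound {n m : ℕ} (hm : 0 < m) (l s : ℝ) (hl : 0 < l) (hs : 2 ≤ s)
    (hls : 2 * l * (4 * s) ^ (s / 2) = n / m) (hmn : (m : ℝ) ≤ (n : ℝ) ^ (s / 2))
    (y : Fin m → ℝ) (hy : ∑ j, phi l s (y j) ≤ 3 * n) :
    (∑ j, |y j| ^ s) ^ (1 / s) ≤ 5 * Real.sqrt (s * n) := by
  have hm' : (0:ℝ) < m := by exact_mod_cast hm
  set S := ∑ j, |y j| ^ s with hS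
  have hS0 : 0 ≤ S := Finset.sum_nonneg fun j _ => by positivity
  have hs0 : 0 < s := by linarith
  rcases hS0.eq_or_lt with h | hSpos
  · rw [← h, Real.zero_rpow (by positivity)]; positivity
  have hn0 : (0:ℝ) ≤ n := by positivity
  -- key inequality
  have hkey : min l (S ^ (2 / s - 1) / 8) * S ≤ 3 * n := by
    refine le_trans ?_ hy
    rw [hS, Finset.mul_sum]
    rw [← hS]
    refine Finset.sum_le_sum fun j _ => ?_
    have hj : |y j| ^ s ≤ S := by
      rw [hS]
      exact Finset.single_le_sum (f := fun j => |y j| ^ s) (fun _ _ => by positivity)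
        (Finset.mem_univ j)
    refine le_min ?_ ?_
    · gcongr; exact min_le_left _ _
    · rcases (abs_nonneg (y j)).eq_or_lt with h0 | h0
      · rw [← h0, Real.zero_rpow hs0.ne']; simp; positivity
      calc _ ≤ S ^ (2 / s - 1) / 8 * |y j| ^ s := by gcongr; exact min_le_right _ _
        _ ≤ (|y j| ^ s) ^ (2 / s - 1) / 8 * |y j| ^ s := by
            gcongr ?_ / 8 * _
            refine Real.rpow_le_rpow_of_nonpos (by positivity) hj ?_
            rw [sub_nonpos, div_le_one hs0]; exact hs
        _ = ((|y j| ^ s) ^ (2 / s - 1) * (|y j| ^ s) ^ (1:ℝ)) / 8 := by rw [Real.rpow_one]; ring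
        _ = _ := by
            rw [← Real.rpow_add (by positivity), ← Real.rpow_mul (abs_nonneg _)]
            have : s * (2 / s - 1 + 1) = (2:ℕ) := by push_cast; field_simp; ring
            rw [this, Real.rpow_natCast, sq_abs]
  rcases le_total l (S ^ (2 / s - 1) / 8) with h | h
  · rw [min_eq_left h] at hkey
    have hSle : S ≤ 6 * m * (4 * s) ^ (s / 2) := by
      have e1 : l * S * (2 * (4 * s) ^ (s / 2)) = n / m * S := by rw [← hls]; ring
      have e2 : n / m * S ≤ 3 * n * (2 * (4 * s) ^ (s / 2)) := by rw [← e1]; gcongr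
      have hnpos : (0:ℝ) < n := by
        have : 0 < (n:ℝ)/m := by rw [← hls]; positivity
        rcases hn0.eq_or_lt with h | h
        · rw [← h] at this; simp at this
        · exact h
      rw [div_mul_eq_mul_div, div_le_iff₀ hm'] at e2
      nlinarith
    have hSle2 : S ≤ (24 * (s * n)) ^ (s / 2) := by
      calc S ≤ 6 * m * (4 * s) ^ (s / 2) := hSle
        _ ≤ 6 ^ (s / 2) * (n:ℝ) ^ (s / 2) * (4 * s) ^ (s / 2) := by
            gcongr
            calc (6:ℝ) = 6 ^ (1:ℝ) := by simp
              _ ≤ _ := Real.rpow_le_rpow_of_exponent_le (by norm_num) (by linarith)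
        _ = _ := by
            rw [← Real.mul_rpow (by norm_num) hn0, ← Real.mul_rpow (by positivity) (by positivity)]
            congr 1; ring
    calc S ^ (1 / s) ≤ ((24 * (s * n)) ^ (s / 2)) ^ (1 / s) := by gcongr
      _ = Real.sqrt (24 * (s * n)) := by
          rw [← Real.rpow_mul (by positivity), Real.sqrt_eq_rpow]; congr 1; field_simp
      _ ≤ Real.sqrt (5 ^ 2 * (s * n)) := by
          apply Real.sqrt_le_sqrt
          have : 0 ≤ s * n := by positivity
          linarith
      _ = _ := by rw [Real.sqrt_mul (by norm_num), Real.sqrt_sq (by norm_num)]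
  · rw [min_eq_right h] at hkey
    have e : S ^ (2 / s - 1) / 8 * S = (S ^ (1 / s)) ^ 2 / 8 := by
      have : S ^ (2 / s - 1) / 8 * S = (S ^ (2 / s - 1) * S ^ (1:ℝ)) / 8 := by
        rw [Real.rpow_one]; ring
      rw [this, ← Real.rpow_add hSpos, ← Real.rpow_natCast, ← Real.rpow_mul hS0]
      congr 2; push_cast; ring
    rw [e] at hkey
    have : (S ^ (1 / s)) ≤ Real.sqrt (5 ^ 2 * (s * n)) := by
      apply Real.le_sqrt_of_sq_le
      nlinarith
    rwa [Real.sqrt_mul (by norm_num), Real.sqrt_sq (by norm_num)] at this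

lemma sum_bound {k m : ℕ} (x : Fin k → Fin m → ℝ) (t : Fin k → ℝ) (ht : ∀ i, 0 ≤ t i)
    (K p r : ℝ) (hK : 0 ≤ K) (hp : 1 ≤ p) (hpr : p ≤ r)
    (htx : ∀ i, t i ≤ K * (∑ j, |x i j| ^ r) ^ (1 / r))
    (hx : ∀ j, ∑ i, |x i j| ^ p ≤ 1) :
    (∑ i, t i ^ p) ^ (1 / p) ≤ (k : ℝ) ^ (1 / p - 1 / r) * (K * (m : ℝ) ^ (1 / r)) := by
  have hp0 : 0 < p := by linarith
  have hr0 : 0 < r := by linarith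
  have h1 : (∑ i, t i ^ p) ^ (r / p) ≤ (k : ℝ) ^ (r / p - 1) * ∑ i, t i ^ r := by
    have := Real.rpow_sum_le_const_mul_sum_rpow_of_nonneg (s := Finset.univ)
      (f := fun i => t i ^ p) (p := r / p) ((one_le_div hp0).2 hpr)
      (fun i _ => Real.rpow_nonneg (ht i) _)
    simp only [Finset.card_univ, Fintype.card_fin] at this
    refine this.trans_eq ?_
    congr 1
    refine Finset.sum_congr rfl fun i _ => ?_
    rw [← Real.rpow_mul (ht i)]; congr 1; field_simp
  have h2 : ∑ i, t i ^ r ≤ K ^ r * m := by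
    calc ∑ i, t i ^ r ≤ ∑ i, K ^ r * ∑ j, |x i j| ^ r := by
          refine Finset.sum_le_sum fun i _ => ?_
          have hnn : 0 ≤ ∑ j, |x i j| ^ r := Finset.sum_nonneg fun j _ => by positivity
          calc t i ^ r ≤ (K * (∑ j, |x i j| ^ r) ^ (1 / r)) ^ r :=
                Real.rpow_le_rpow (ht i) (htx i) hr0.le
            _ = _ := by
                rw [Real.mul_rpow hK (by positivity), ← Real.rpow_mul hnn, one_div_mul_cancel hr0.ne',
                  Real.rpow_one]
      _ = K ^ r * ∑ j, ∑ i, |x i j| ^ r := by rw [← Finset.mul_sum, Finset.sum_comm]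
      _ ≤ K ^ r * ∑ j : Fin m, 1 := by
          gcongr with j _
          refine le_trans ?_ (hx j)
          refine Finset.sum_le_sum fun i _ => ?_
          have hle : |x i j| ≤ 1 := by
            have h3 : |x i j| ^ p ≤ 1 :=
              (Finset.single_le_sum (f := fun i => |x i j| ^ p) (fun _ _ => by positivity)
                (Finset.mem_univ i)).trans (hx j)
            by_contra! hc
            exact absurd h3 (not_le.2 (Real.one_lt_rpow hc hp0))
          exact Real.rpow_le_rpow_of_exponent_ge_of_imp (abs_nonneg _) hle hpr (by
            intro _ h; exact absurd h hr0.ne')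
      _ = _ := by simp
  have hS : 0 ≤ ∑ i, t i ^ p := Finset.sum_nonneg fun i _ => Real.rpow_nonneg (ht i) _
  calc (∑ i, t i ^ p) ^ (1 / p) = ((∑ i, t i ^ p) ^ (r / p)) ^ (1 / r) := by
        rw [← Real.rpow_mul hS]; congr 1; field_simp
    _ ≤ ((k : ℝ) ^ (r / p - 1) * (K ^ r * m)) ^ (1 / r) := by
        gcongr
        exact h1.trans (by gcongr)
    _ = _ := by
        rw [Real.mul_rpow (by positivity) (by positivity), Real.mul_rpow (by positivity) (by positivity),
          ← Real.rpow_mul (by positivity), ← Real.rpow_mul hK, mul_one_div_cancel hr0.ne',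
          Real.rpow_one]
        congr 2; field_simp

def sgnVec {n : ℕ} (e : Fin n → Bool) : EuclideanSpace ℝ (Fin n) := WithLp.toLp 2 fun i => sgn (e i)

def opT {n m : ℕ} (ε : Fin m → Fin n → Bool) :
    PiLp ∞ (fun _ : Fin m => ℝ) →L[ℝ] EuclideanSpace ℝ (Fin n) :=
  ∑ j, (PiLp.proj ∞ (fun _ : Fin m => ℝ) j : PiLp ∞ (fun _ : Fin m => ℝ) →L[ℝ] ℝ).smulRight (sgnVec (ε j))

lemma opT_apply {n m : ℕ} (ε : Fin m → Fin n → Bool) (x : PiLp ∞ (fun _ : Fin m => ℝ)) :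
    opT ε x = ∑ j, x j • sgnVec (ε j) := by
  simp [opT]

lemma norm_sgnVec {n : ℕ} (e : Fin n → Bool) : ‖sgnVec e‖ = Real.sqrt n := by
  rw [EuclideanSpace.norm_eq]
  congr 1
  have : ∀ i, ‖(sgnVec e) i‖ ^ 2 = 1 := by
    intro i
    simp only [sgnVec, sgn]
    split_ifs <;> simp
  rw [Finset.sum_congr rfl fun i _ => this i]; simp

lemma inner_opT {n m : ℕ} (ε : Fin m → Fin n → Bool) (x : PiLp ∞ (fun _ : Fin m => ℝ))
    (c : EuclideanSpace ℝ (Fin n)) : inner ℝ (opT ε x) c = ∑ j, x j * Y (ε j) c := by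
  rw [opT_apply, sum_inner]
  refine Finset.sum_congr rfl fun j _ => ?_
  rw [real_inner_smul_left]
  congr 1
  simp [PiLp.inner_apply, Y, sgnVec, mul_comm]

lemma exists_op {n m : ℕ} (hn : 0 < n) (hm : 0 < m) (s r : ℝ) (hs : 2 ≤ s)
    (hrs : r.HolderConjugate s) (hmn : (m : ℝ) ≤ (n : ℝ) ^ (s / 2)) :
    ∃ ε : Fin m → Fin n → Bool, ∀ x : PiLp ∞ (fun _ : Fin m => ℝ),
      ‖opT ε x‖ ≤ 10 * Real.sqrt (s * n) * (∑ j, |x j| ^ r) ^ (1 / r) := by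
  obtain ⟨N, hN, hN1, hN2⟩ := net n
  have hm' : (0:ℝ) < m := by exact_mod_cast hm
  have hn' : (0:ℝ) < n := by exact_mod_cast hn
  have h4 : 0 < (4 * s) ^ (s / 2) := by positivity
  set l : ℝ := (n / m) / (2 * (4 * s) ^ (s / 2)) with hl
  have hl0 : 0 < l := by positivity
  have hls : 2 * l * (4 * s) ^ (s / 2) = n / m := by rw [hl]; field_simp
  obtain ⟨ε, hε⟩ := exists_signs hm N hN hN1 l s hl0.le hs hls
  refine ⟨ε, fun x => ?_⟩
  set v := opT ε x
  have hR : 0 ≤ (∑ j, |x j| ^ r) ^ (1 / r) :=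
    Real.rpow_nonneg (Finset.sum_nonneg fun j _ => by positivity) _
  rcases (norm_nonneg v).eq_or_lt with h0 | h0
  · rw [← h0]; positivity
  obtain ⟨c, hc, hcu⟩ := hN2 (‖v‖⁻¹ • v) (by rw [norm_smul, norm_inv, norm_norm, inv_mul_cancel₀ h0.ne'])
  have h1 : inner ℝ v (‖v‖⁻¹ • v) = ‖v‖ := by
    rw [real_inner_smul_right, real_inner_self_eq_norm_sq]; field_simp
  have h2 : inner ℝ v (‖v‖⁻¹ • v - c) ≤ ‖v‖ * (1 / 2) :=
    (real_inner_le_norm _ _).trans (by gcongr)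
  rw [inner_sub_right, h1] at h2
  have h3 : inner ℝ v c ≤ (∑ j, |x j| ^ r) ^ (1 / r) * (5 * Real.sqrt (s * n)) := by
    rw [inner_opT]
    refine (Real.inner_le_Lp_mul_Lq Finset.univ (fun j => x j) (fun j => Y (ε j) c) hrs).trans ?_
    gcongr
    exact det_bound hm l s hl0 hs hls hmn _ (hε c hc)
  linarith

lemma eSum_ofReal {p : ℝ} (hp : 1 ≤ p) {ι : Type*} [Fintype ι] (f : ι → ℝ) (hf : ∀ i, 0 ≤ f i) :
    eSum (ENNReal.ofReal p) (fun i => ENNReal.ofReal (f i))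
      = ENNReal.ofReal ((∑ i, f i ^ p) ^ (1 / p)) := by
  have hp0 : 0 < p := by linarith
  simp only [eSum, ENNReal.ofReal_ne_top, if_false, ENNReal.toReal_ofReal hp0.le]
  rw [← ENNReal.ofReal_rpow_of_nonneg (Finset.sum_nonneg fun i _ => Real.rpow_nonneg (hf i) _)
    (by positivity), ENNReal.ofReal_sum_of_nonneg fun i _ => Real.rpow_nonneg (hf i) _]
  congr 1
  exact Finset.sum_congr rfl fun i _ => ENNReal.ofReal_rpow_of_nonneg (hf i) hp0.le

lemma weak_basis (m : ℕ) :
    weakLq 1 (fun j : Fin m => (WithLp.toLp ∞ (Pi.single j (1:ℝ)) : PiLp ∞ (fun _ : Fin m => ℝ))) ≤ 1 := by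
  refine iSup_le fun f => ?_
  have h1 : (1:ℝ≥0∞) = ENNReal.ofReal 1 := by simp
  rw [h1, eSum_ofReal le_rfl _ (fun _ => abs_nonneg _)]
  apply ENNReal.ofReal_le_ofReal
  simp only [Real.rpow_one, div_one]
  set e : Fin m → PiLp ∞ (fun _ : Fin m => ℝ) := fun j => WithLp.toLp ∞ (Pi.single j (1:ℝ)) with he
  let w : PiLp ∞ (fun _ : Fin m => ℝ) := WithLp.toLp ∞ fun j => (SignType.sign (f.1 (e j)) : ℝ)
  have hw : w = ∑ j, w j • e j := by
    ext i
    simp [he, Pi.single_apply]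
  have hwn : ‖w‖ ≤ 1 := by
    rw [PiLp.norm_eq_ciSup]
    refine Real.iSup_le (fun j => ?_) zero_le_one
    simp only [w]
    rcases SignType.sign (f.1 (e j)) with _ | _ | _ <;> simp
  have hfw : f.1 w = ∑ j, |f.1 (e j)| := by
    rw [hw, map_sum]
    refine Finset.sum_congr rfl fun j _ => ?_
    rw [map_smul, smul_eq_mul]
    simp only [w]
    rw [mul_comm]; exact self_mul_sign _
  show ∑ j, |f.1 (e j)| ≤ 1
  rw [← hfw]
  calc f.1 w ≤ ‖f.1 w‖ := le_abs_self _
    _ ≤ ‖f.1‖ * ‖w‖ := f.1.le_opNorm w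
    _ ≤ 1 * 1 := mul_le_mul f.2 hwn (norm_nonneg _) zero_le_one
    _ = 1 := one_mul 1

lemma weak_coord {p : ℝ} (hp : 1 ≤ p) {k m : ℕ} (x : Fin k → PiLp ∞ (fun _ : Fin m => ℝ))
    (hx : weakLq (ENNReal.ofReal p) x ≤ 1) (j : Fin m) : ∑ i, |x i j| ^ p ≤ 1 := by
  have hp0 : 0 < p := by linarith
  let P : PiLp ∞ (fun _ : Fin m => ℝ) →L[ℝ] ℝ := PiLp.proj ∞ (fun _ : Fin m => ℝ) j
  have hP : ‖P‖ ≤ 1 := P.opNorm_le_bound zero_le_one fun y => by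
    rw [one_mul]; exact PiLp.norm_apply_le y j
  have h := (le_iSup (fun f : {f : PiLp ∞ (fun _ : Fin m => ℝ) →L[ℝ] ℝ // ‖f‖ ≤ 1} =>
    eSum (ENNReal.ofReal p) fun k => ENNReal.ofReal |f.1 (x k)|) ⟨P, hP⟩).trans hx
  simp only at h
  rw [eSum_ofReal hp _ (fun _ => abs_nonneg _), ENNReal.ofReal_le_one] at h
  have hnn : 0 ≤ ∑ i, |x i j| ^ p := Finset.sum_nonneg fun i _ => by positivity
  by_contra! hc
  exact absurd h (not_le.2 (Real.one_lt_rpow hc (by positivity)))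

lemma lower {p : ℝ} (hp : 1 ≤ p) {n m : ℕ} (ε : Fin m → Fin n → Bool) :
    ENNReal.ofReal ((m : ℝ) ^ (1 / p) * Real.sqrt n) ≤ piPQ (ENNReal.ofReal p) 1 (opT ε) := by
  have hp0 : 0 < p := by linarith
  refine le_trans ?_ (le_iSup (fun N => piN (ENNReal.ofReal p) 1 N (opT ε)) m)
  refine le_trans ?_ (le_iSup (fun x : {x : Fin m → PiLp ∞ (fun _ : Fin m => ℝ) // weakLq 1 x ≤ 1} =>
    eSum (ENNReal.ofReal p) fun k => ENNReal.ofReal ‖opT ε (x.1 k)‖) ⟨_, weak_basis m⟩)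
  simp only
  rw [eSum_ofReal hp _ (fun _ => norm_nonneg _)]
  apply ENNReal.ofReal_le_ofReal
  have : ∀ j : Fin m, ‖opT ε (WithLp.toLp ∞ (Pi.single j (1:ℝ)))‖ = Real.sqrt n := by
    intro j
    rw [opT_apply, ← norm_sgnVec (ε j)]
    congr 1
    rw [Finset.sum_eq_single j]
    · simp
    · intro b _ hb; simp [hb]
    · simp
  simp only [this, Finset.sum_const, Finset.card_univ, Fintype.card_fin, nsmul_eq_mul]
  rw [Real.mul_rpow (by positivity) (by positivity), ← Real.rpow_mul (by positivity),
    mul_one_div_cancel hp0.ne', Real.rpow_one]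

/-- for `1 ≤ p < 2 ≤ s < p' ≤ ∞` (`p'` the conjugate exponent of
`p`), there is an absolute constant `c₀` such that for every `n ≥ 1` there is an
operator `T : ℓ_∞^{⌊n^{s/2}⌋} → ℓ_2^n` with `π_{p,1}(T) > 0` and
`π_p^k(T) ≤ c₀ √s (k/n^{s/2})^{1/s - 1/p'} π_{p,1}(T)` for all `k`. -/
theorem statement18 :
    ∃ c₀ : ℝ, 0 < c₀ ∧
      ∀ (p s : ℝ) (p' : ℝ≥0∞), 1 ≤ p → p < 2 → 2 ≤ s →
        1 / ENNReal.ofReal p + 1 / p' = 1 → ENNReal.ofReal s < p' →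
        ∀ n : ℕ, 0 < n →
          ∃ T : PiLp ∞ (fun _ : Fin ⌊(n : ℝ) ^ (s / 2)⌋₊ => ℝ) →L[ℝ]
              EuclideanSpace ℝ (Fin n),
            0 < piPQ (ENNReal.ofReal p) 1 T ∧
            ∀ k : ℕ,
              piN (ENNReal.ofReal p) (ENNReal.ofReal p) k T ≤
                ENNReal.ofReal (c₀ * Real.sqrt s *
                    ((k : ℝ) / (n : ℝ) ^ (s / 2)) ^ (1 / s - (1 / p').toReal)) *
                  piPQ (ENNReal.ofReal p) 1 T := by
  refine ⟨20, by norm_num, ?_⟩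
  intro p s p' hp hp2 hs hpp hsp n hn
  have hp0 : 0 < p := by linarith
  have hs0 : 0 < s := by linarith
  have hn1 : (1:ℝ) ≤ n := by exact_mod_cast hn
  have hn0 : (0:ℝ) < n := by linarith
  set M : ℝ := (n : ℝ) ^ (s / 2) with hM
  have hM1 : 1 ≤ M := Real.one_le_rpow hn1 (by positivity)
  set m : ℕ := ⌊M⌋₊ with hmdef
  have hm : 0 < m := Nat.floor_pos.2 hM1
  have hm1 : (1:ℝ) ≤ m := by exact_mod_cast hm
  have hmM : (m:ℝ) ≤ M := Nat.floor_le (by linarith)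
  have hM2 : M ≤ 2 * m := by
    have := Nat.lt_floor_add_one M
    linarith
  -- exponents
  have hq : (1 / p').toReal = 1 - 1 / p := by
    have hle : 1 / p' ≤ 1 := by exact (self_le_add_left (1 / p') (1 / ENNReal.ofReal p)).trans hpp.le
    have h2 : (1 / p') ≠ ∞ := ne_top_of_le_ne_top ENNReal.one_ne_top hle
    have h3 : 1 / ENNReal.ofReal p = ENNReal.ofReal (1 / p) := by
      rw [one_div, one_div, ENNReal.ofReal_inv_of_pos hp0]
    rw [h3] at hpp
    have h4 := congrArg ENNReal.toReal hpp
    rw [ENNReal.toReal_add ENNReal.ofReal_ne_top h2, ENNReal.toReal_ofReal (by positivity)] at h4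
    simp only [ENNReal.toReal_one] at h4
    linarith
  have hθ : (1 / p').toReal < 1 / s := by
    have h1 : 1 / p' < 1 / ENNReal.ofReal s := by
      rw [one_div, one_div]; exact ENNReal.inv_lt_inv.2 hsp
    have h3 : 1 / ENNReal.ofReal s = ENNReal.ofReal (1 / s) := by
      rw [one_div, one_div, ENNReal.ofReal_inv_of_pos hs0]
    rw [h3] at h1
    have := (ENNReal.toReal_lt_toReal h1.ne_top ENNReal.ofReal_ne_top).2 h1
    rwa [ENNReal.toReal_ofReal (by positivity)] at this
  rw [hq] at hθ ⊢
  set r : ℝ := s / (s - 1) with hr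
  have hs1 : 0 < s - 1 := by linarith
  have hr1 : 1 / r = 1 - 1 / s := by rw [hr]; field_simp
  have hr0 : 0 < r := by positivity
  have hrs : r.HolderConjugate s := by
    have : s.HolderConjugate (s / (s - 1)) := Real.HolderConjugate.conjExponent (by linarith)
    exact this.symm
  have hpr : p ≤ r := by
    have : 1 / r ≤ 1 / p := by rw [hr1]; linarith
    exact (one_div_le_one_div hr0 hp0).1 this
  set θ : ℝ := 1 / s - (1 - 1 / p) with hθdef
  have hθ0 : 0 < θ := by linarith
  have hθ1 : θ ≤ 1 := by
    have : 1 / s ≤ 1 := by rw [div_le_one hs0]; linarith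
    have : 1 / p ≤ 1 := by rw [div_le_one hp0]; linarith
    linarith
  have hθr : 1 / p - 1 / r = θ := by rw [hr1, hθdef]; ring
  obtain ⟨ε, hε⟩ := exists_op hn hm s r hs hrs hmM
  have hlow := lower hp ε
  refine ⟨opT ε, lt_of_lt_of_le (ENNReal.ofReal_pos.2 (by positivity)) hlow, fun k => ?_⟩
  refine le_trans ?_ (mul_le_mul_right hlow _)
  rw [← ENNReal.ofReal_mul (by positivity)]
  refine iSup_le fun x => ?_
  rw [eSum_ofReal hp _ (fun _ => norm_nonneg _)]
  apply ENNReal.ofReal_le_ofReal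
  refine (sum_bound (fun i j => x.1 i j) (fun i => ‖opT ε (x.1 i)‖) (fun _ => norm_nonneg _)
    (10 * Real.sqrt (s * n)) p r (by positivity) hp hpr (fun i => hε _)
    (weak_coord hp x.1 x.2)).trans ?_
  rw [hθr, Real.sqrt_mul hs0.le, Real.div_rpow (by positivity) (by positivity)]
  have hmθ : (m:ℝ) ^ (1 / p) = (m:ℝ) ^ θ * (m:ℝ) ^ (1 / r) := by
    rw [← Real.rpow_add (by positivity), ← hθr]; congr 1; ring
  have hMθ : M ^ θ ≤ 2 * (m:ℝ) ^ θ := by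
    calc M ^ θ ≤ (2 * m) ^ θ := by gcongr
      _ = 2 ^ θ * (m:ℝ) ^ θ := Real.mul_rpow (by norm_num) (by positivity)
      _ ≤ 2 ^ (1:ℝ) * (m:ℝ) ^ θ := by
          gcongr
          norm_num
      _ = _ := by rw [Real.rpow_one]
  have hMpos : 0 < M ^ θ := by positivity
  rw [hmθ]
  have key : (k:ℝ) ^ θ ≤ 2 * ((k:ℝ) ^ θ / M ^ θ) * (m:ℝ) ^ θ := by
    have : 2 * ((k:ℝ) ^ θ / M ^ θ) * (m:ℝ) ^ θ = (k:ℝ) ^ θ * (2 * (m:ℝ) ^ θ) / M ^ θ := by ring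
    rw [this, le_div_iff₀ hMpos]
    gcongr
  have := mul_le_mul_of_nonneg_right key
    (show 0 ≤ 10 * (Real.sqrt s * Real.sqrt n) * (m:ℝ) ^ (1 / r) by positivity)
  linarith

end
end
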